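/- arXiv:2111.04387 — 3 statements merged into one kernel-verified Lean document; each statement's English description precedes it below -/
import Mathlib

section
/- Let m ≥ 3 be an odd integer and let p, p+2 be a pair of twin primes (both p and p+2 prime). Then p divides the class number of ℚ(√(1 − 2m^p)) or p+2 divides the class number of ℚ(√(1 − 2m^{p+2})). -/
open Polynomial NumberField

/-- A fixed choice of complex square root of the integer `d`. -/
noncomputable def sqrtC (d : ℤ) : ℂ := (d : ℂ) ^ ((1 : ℂ) / 2)

lemma sqrtC_sq (d : ℤ) : sqrtC d ^ 2 = (d : ℂ) := by
  unfold sqrtC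
  rcases eq_or_ne (d : ℂ) 0 with h | h
  · rw [h, Complex.zero_cpow (by norm_num : (1 : ℂ) / 2 ≠ 0)]
    simp
  · rw [pow_two, ← Complex.cpow_add _ _ h]
    norm_num

lemma isIntegral_sqrtC (d : ℤ) : IsIntegral ℚ (sqrtC d) := by
  refine ⟨X ^ 2 - C (d : ℚ), monic_X_pow_sub_C _ two_ne_zero, ?_⟩
  have : (Polynomial.aeval (sqrtC d)) (X ^ 2 - C (d : ℚ)) = 0 := by
    simp [sqrtC_sq]
  simpa [Polynomial.aeval_def] using this

/-- The (number) field `ℚ(√d)`, realized as a subfield of `ℂ`. -/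
noncomputable def Qsqrt (d : ℤ) : IntermediateField ℚ ℂ :=
  IntermediateField.adjoin ℚ {sqrtC d}

instance (d : ℤ) : FiniteDimensional ℚ (Qsqrt d) :=
  IntermediateField.adjoin.finiteDimensional (isIntegral_sqrtC d)

instance (d : ℤ) : NumberField (Qsqrt d) := ⟨⟩

/-!
Suppose `n = 2 * k + 1` is coprime to the class number of `ℚ(√d)`, where `d = 1 - 2 * m ^ n`.
The numbers `1 - m ^ n ± √d` are coprime with product `m ^ (2 * n)`, and every unit `u` satisfies
`u ^ 4 = 1`, so `(1 + √d) ^ 2 / 2 = 1 - m ^ n + √d = γ ^ n` for an algebraic integer `γ`. Then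
`δ = (1 + √d) / γ ^ k` is an algebraic integer with `δ ^ n = 2 ^ k * (1 + √d)`, and hence with
`|δ| ^ 2 = 2 * m`. Since `d` is `3` modulo `4`, real parts of algebraic integers of `ℚ(√d)` are
rational integers, and a congruence modulo the real part of `δ` forces it to be `±1`. Up to sign
and conjugation `δ` is therefore `w = 1 + √(1 - 2 * m)`, whence `|re (w ^ n)| = 2 ^ k`.

The number `w` does not depend on `n`, and `|w| ^ 2 = 2 * m` is too large for this to happen for
both `n` and `n + 2`.
-/

section CommRing

variable {R : Type*} [CommRing R]

theorem exists_associated_pow_of_mul_eq_pow_of_coprime_card_classGroup [IsDedekindDomain R]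
    [Fintype (ClassGroup R)] {n : ℕ} (hn : n.Coprime (Fintype.card (ClassGroup R))) {a b c : R}
    (hab : IsCoprime a b) (h : a * b = c ^ n) : ∃ g : R, Associated (g ^ n) a := by
  have hspan : Ideal.span {a} * Ideal.span {b} = Ideal.span {c} ^ n := by
    rw [Ideal.span_singleton_mul_span_singleton, Ideal.span_singleton_pow, h]
  obtain ⟨I, hI⟩ := exists_eq_pow_of_mul_eq_pow_of_coprime
    ((Ideal.isCoprime_span_singleton_iff a b).2 hab) hspan
  have hprincipal : I.IsPrincipal :=
    Ideal.IsPrincipal.of_isPrincipal_pow_of_coprime hn (hI ▸ ⟨a, rfl⟩)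
  obtain ⟨g, rfl⟩ := hprincipal
  refine ⟨g, ?_⟩
  rw [← Ideal.span_singleton_eq_span_singleton, ← Ideal.span_singleton_pow, hI]

theorem exists_pow_eq_of_associated_pow {n e : ℕ} (hn : n.Coprime e) (hunit : ∀ u : Rˣ, u ^ e = 1)
    {g b : R} (h : Associated (g ^ n) b) : ∃ γ : R, γ ^ n = b := by
  obtain ⟨u, rfl⟩ := h
  obtain ⟨j, hj⟩ := exists_pow_eq_self_of_coprime
    (hn.coprime_dvd_right (orderOf_dvd_of_pow_eq_one (hunit u)))
  refine ⟨g * (u ^ j : Rˣ), ?_⟩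
  rw [mul_pow, ← Units.val_pow_eq_pow_val, pow_right_comm, hj]

theorem isCoprime_one_sub_add_one_sub_sub {c s : R} (hc : IsCoprime 2 c) (hs : s ^ 2 = 1 - 2 * c) :
    IsCoprime (1 - c + s) (1 - c - s) := by
  have hone : IsCoprime (1 - c) c := ⟨1, 1, by ring⟩
  have hsum : IsCoprime ((1 - c + s) + (1 - c - s)) ((1 - c + s) * (1 - c - s)) := by
    convert (hc.mul_left hone).pow_right (n := 2) using 1
    · ring
    · linear_combination -hs
  have hadd := hsum.of_mul_right_left
  rw [add_comm] at hadd
  exact (IsCoprime.of_add_mul_left_left (z := 1) (by rwa [mul_one])).symm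

theorem exists_pow_eq_two_pow_mul_of_sq_eq_two_mul_pow [IsDomain R] [IsIntegrallyClosed R]
    {k : ℕ} {α γ : R} (h : α ^ 2 = 2 * γ ^ (2 * k + 1)) : ∃ δ : R, δ ^ (2 * k + 1) = 2 ^ k * α := by
  rcases eq_or_ne γ 0 with rfl | hγ
  · have hα : α = 0 := by simpa using h
    exact ⟨0, by simp [hα]⟩
  obtain ⟨δ, rfl⟩ : γ ^ k ∣ α :=
    (IsIntegrallyClosed.pow_dvd_pow_iff two_ne_zero).1 ⟨2 * γ, by rw [h]; ring⟩
  have hδ : δ ^ 2 = 2 * γ :=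
    mul_left_cancel₀ (pow_ne_zero 2 (pow_ne_zero k hγ)) (by linear_combination h)
  exact ⟨δ, by rw [pow_succ, pow_mul, hδ]; ring⟩

theorem eq_mul_pow_of_sq_eq_two_mul [IsDomain R] [NeZero (2 : R)] {k : ℕ} {a m δ α : R}
    (hδ : δ ^ 2 = 2 * (a * δ - m)) (h : δ ^ (2 * k + 1) = 2 ^ k * α) :
    α = δ * (a * δ - m) ^ k := by
  refine mul_left_cancel₀ (pow_ne_zero k (two_ne_zero' R)) ?_
  rw [← h, pow_succ, pow_mul, hδ, mul_pow]
  ring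

end CommRing

theorem even_of_sq_sub_four_mul_eq {t N d : ℤ} {b : ℚ} (hd : d % 4 = 3)
    (h : (t : ℚ) ^ 2 - 4 * N = 4 * d * b ^ 2) : Even t := by
  have hsq : IsSquare ((d * (t ^ 2 - 4 * N) : ℤ) : ℚ) := by
    refine ⟨2 * d * b, ?_⟩
    push_cast
    linear_combination (d : ℚ) * h
  -- For odd `t` the square `d * (t ^ 2 - 4 * N)` would be `3` modulo `4`.
  obtain ⟨r, hr⟩ := Rat.isSquare_intCast_iff.1 hsq
  by_contra ht
  have ht1 : t ^ 2 % 4 = 1 := Int.sq_mod_four_eq_one_of_odd (Int.not_even_iff_odd.1 ht)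
  have hr3 : r * r % 4 = 3 := by
    rw [← hr, Int.mul_emod, Int.sub_emod, ht1, hd]
    omega
  rcases Int.even_or_odd r with ⟨q, rfl⟩ | ⟨q, rfl⟩ <;> ring_nf at hr3 <;> omega

section Complex

open ComplexConjugate

theorem exists_intCast_eq_of_isIntegral_ratCast {q : ℚ} (h : IsIntegral ℤ (q : ℂ)) :
    ∃ t : ℤ, t = q :=
  IsIntegrallyClosed.isIntegral_iff.1 <|
    (isIntegral_algebraMap_iff (algebraMap ℚ ℂ).injective).1 h

theorem isIntegral_conj {z : ℂ} (h : IsIntegral ℤ z) : IsIntegral ℤ (conj z) :=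
  h.map (Complex.conjAe.restrictScalars ℤ).toAlgHom

theorem abs_re_pow_eq_of_normSq_eq {z w : ℂ} (hre : |z.re| = |w.re|)
    (hnorm : Complex.normSq z = Complex.normSq w) (n : ℕ) : |(z ^ n).re| = |(w ^ n).re| := by
  have him : |z.im| = |w.im| := by
    rw [← sq_eq_sq_iff_abs_eq_abs] at hre ⊢
    rw [Complex.normSq_apply, Complex.normSq_apply] at hnorm
    linarith
  have habs_neg : ∀ v : ℂ, |((-v) ^ n).re| = |(v ^ n).re| := fun v => by
    rcases n.even_or_odd with hn | hn <;> simp [hn.neg_pow]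
  have habs_conj : ∀ v : ℂ, |((conj v) ^ n).re| = |(v ^ n).re| := fun v => by
    rw [← map_pow, Complex.conj_re]
  rcases abs_eq_abs.1 hre with hre | hre <;> rcases abs_eq_abs.1 him with him | him
  · rw [Complex.ext hre him]
  · rw [← habs_conj w, Complex.ext (w := conj w) hre him]
  · rw [← habs_conj w, ← habs_neg (conj w),
      Complex.ext (w := -conj w) hre (by simpa using him)]
  · rw [← habs_neg w, Complex.ext (w := -w) hre him]

theorem im_sq_of_re_eq_one {w : ℂ} {m : ℝ} (hre : w.re = 1) (hnorm : Complex.normSq w = 2 * m) :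
    w.im ^ 2 = 2 * m - 1 := by
  rw [Complex.normSq_apply, hre] at hnorm
  linarith

theorem re_mul_sq_of_re_eq_one {w : ℂ} {m : ℝ} (hre : w.re = 1)
    (hnorm : Complex.normSq w = 2 * m) (z : ℂ) :
    (z * w ^ 2).re = 2 * ((1 - m) * z.re - w.im * z.im) := by
  simp only [sq w, Complex.mul_re, Complex.mul_im, hre]
  linear_combination -z.re * im_sq_of_re_eq_one hre hnorm

theorem abs_re_pow_ne_two_pow_succ {w : ℂ} {m : ℝ} (hm : 1 < m) (hre : w.re = 1)
    (hnorm : Complex.normSq w = 2 * m) {k : ℕ} (h : |(w ^ (2 * k + 1)).re| = 2 ^ k) :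
    |(w ^ (2 * (k + 1) + 1)).re| ≠ 2 ^ (k + 1) := by
  intro h'
  set z := w ^ (2 * k + 1) with hz
  have hstep : (w ^ (2 * (k + 1) + 1)).re = 2 * ((1 - m) * z.re - w.im * z.im) := by
    rw [show w ^ (2 * (k + 1) + 1) = z * w ^ 2 by rw [hz]; ring]
    exact re_mul_sq_of_re_eq_one hre hnorm z
  have hzpos : 0 < |z.re| := h ▸ by positivity
  have him_le : |w.im * z.im| ≤ m * |z.re| := by
    calc |w.im * z.im| = |(1 - m) * z.re - (w ^ (2 * (k + 1) + 1)).re / 2| := by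
          rw [hstep]
          ring_nf
      _ ≤ |(1 - m) * z.re| + |(w ^ (2 * (k + 1) + 1)).re / 2| := abs_sub _ _
      _ = (m - 1) * |z.re| + |z.re| := by
          rw [abs_mul, abs_sub_comm, abs_of_pos (sub_pos.2 hm), abs_div, h', h, abs_two, pow_succ,
            mul_div_cancel_right₀ _ two_ne_zero]
      _ = m * |z.re| := by ring
  have him_ge : (2 * m - 1) * |z.re| ^ 2 ≤ z.im ^ 2 := by
    have hznorm : Complex.normSq z = 2 * m * (m ^ 2) ^ k * |z.re| ^ 2 := by
      rw [hz, map_pow, hnorm, ← hz, h]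
      ring
    have hone : 1 ≤ (m ^ 2) ^ k := one_le_pow₀ (by nlinarith)
    rw [Complex.normSq_apply, ← sq, ← sq, ← sq_abs z.re] at hznorm
    have hgrow : 2 * m * 1 * |z.re| ^ 2 ≤ 2 * m * (m ^ 2) ^ k * |z.re| ^ 2 := by gcongr
    linarith
  have hle : (2 * m - 1) ^ 2 * |z.re| ^ 2 ≤ m ^ 2 * |z.re| ^ 2 := by
    calc (2 * m - 1) ^ 2 * |z.re| ^ 2 = (2 * m - 1) * ((2 * m - 1) * |z.re| ^ 2) := by ring
      _ ≤ (2 * m - 1) * z.im ^ 2 := by gcongr; linarith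
      _ = |w.im * z.im| ^ 2 := by rw [sq_abs, mul_pow, im_sq_of_re_eq_one hre hnorm]
      _ ≤ (m * |z.re|) ^ 2 := by gcongr
      _ = m ^ 2 * |z.re| ^ 2 := by ring
  nlinarith [le_of_mul_le_mul_right hle (by positivity)]

end Complex

section SqrtC

variable {d : ℤ}

theorem sqrtC_re (hd : d < 0) : (sqrtC d).re = 0 := by
  have hre := congrArg Complex.re (sqrtC_sq d)
  have him := congrArg Complex.im (sqrtC_sq d)
  simp only [sq, Complex.mul_re, Complex.mul_im, Complex.intCast_re, Complex.intCast_im] at hre him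
  have hd' : (d : ℝ) < 0 := by exact_mod_cast hd
  rcases mul_eq_zero.1 (show (sqrtC d).re * (sqrtC d).im = 0 by linarith) with h | h
  · exact h
  · rw [h] at hre
    nlinarith [mul_self_nonneg (sqrtC d).re]

theorem sqrtC_im_sq (hd : d < 0) : (sqrtC d).im ^ 2 = -d := by
  have hre := congrArg Complex.re (sqrtC_sq d)
  simp only [sq, Complex.mul_re, sqrtC_re hd, Complex.intCast_re] at hre
  linarith

theorem normSq_one_add_sqrtC (hd : d < 0) : Complex.normSq (1 + sqrtC d) = 1 - d := by
  rw [Complex.normSq_apply, ← sq, ← sq, Complex.add_re, Complex.add_im, Complex.one_re,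
    Complex.one_im, sqrtC_re hd, zero_add, sqrtC_im_sq hd]
  ring

theorem isIntegral_int_sqrtC (d : ℤ) : IsIntegral ℤ (sqrtC d) :=
  .of_pow two_pos (sqrtC_sq d ▸ isIntegral_algebraMap (x := d))

theorem exists_eq_add_mul_sqrtC {z : ℂ} (hz : z ∈ Qsqrt d) : ∃ a b : ℚ, z = a + b * sqrtC d := by
  rw [Qsqrt, ← IntermediateField.mem_toSubalgebra,
    IntermediateField.adjoin_simple_toSubalgebra_of_isAlgebraic
      (isIntegral_sqrtC d).isAlgebraic] at hz
  induction hz using Algebra.adjoin_induction with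
  | mem x hx => exact ⟨0, 1, by simpa using hx⟩
  | algebraMap r => exact ⟨r, 0, by simp⟩
  | add x y _ _ hx hy =>
    obtain ⟨a, b, rfl⟩ := hx
    obtain ⟨a', b', rfl⟩ := hy
    exact ⟨a + a', b + b', by push_cast; ring⟩
  | mul x y _ _ hx hy =>
    obtain ⟨a, b, rfl⟩ := hx
    obtain ⟨a', b', rfl⟩ := hy
    refine ⟨a * a' + b * b' * d, a * b' + b * a', ?_⟩
    push_cast
    linear_combination (b : ℂ) * b' * sqrtC_sq d

theorem exists_re_im_eq (hd : d < 0) {z : ℂ} (hz : z ∈ Qsqrt d) :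
    ∃ a b : ℚ, z.re = a ∧ z.im ^ 2 = -d * b ^ 2 := by
  obtain ⟨a, b, rfl⟩ := exists_eq_add_mul_sqrtC hz
  refine ⟨a, b, ?_, ?_⟩
  · simp [sqrtC_re hd]
  · simp [mul_pow, sqrtC_im_sq hd, mul_comm]

end SqrtC

namespace Qsqrt

variable {d : ℤ}

/-- The square root of `d` as an element of the ring of integers of `ℚ(√d)`. -/
noncomputable def sqrtInt (d : ℤ) : 𝓞 (Qsqrt d) :=
  ⟨⟨sqrtC d, IntermediateField.mem_adjoin_simple_self ℚ _⟩,
    (isIntegral_algebraMap_iff (algebraMap (Qsqrt d) ℂ).injective).1 (isIntegral_int_sqrtC d)⟩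

theorem algebraMap_sqrtInt (d : ℤ) : algebraMap (𝓞 (Qsqrt d)) ℂ (sqrtInt d) = sqrtC d := rfl

theorem sqrtInt_sq (d : ℤ) : sqrtInt d ^ 2 = d := by
  apply FaithfulSMul.algebraMap_injective (𝓞 (Qsqrt d)) ℂ
  rw [map_pow, algebraMap_sqrtInt, sqrtC_sq, map_intCast]

theorem algebraMap_mem (x : 𝓞 (Qsqrt d)) : algebraMap (𝓞 (Qsqrt d)) ℂ x ∈ Qsqrt d :=
  (x : Qsqrt d).2

theorem isIntegral_algebraMap_complex (x : 𝓞 (Qsqrt d)) :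
    IsIntegral ℤ (algebraMap (𝓞 (Qsqrt d)) ℂ x) :=
  (RingOfIntegers.isIntegral x).algebraMap

theorem exists_intCast_eq_normSq (hd : d < 0) (x : 𝓞 (Qsqrt d)) :
    ∃ N : ℤ, (N : ℝ) = Complex.normSq (algebraMap (𝓞 (Qsqrt d)) ℂ x) := by
  set z := algebraMap (𝓞 (Qsqrt d)) ℂ x
  obtain ⟨a, b, ha, hb⟩ := exists_re_im_eq hd (algebraMap_mem x)
  have hnorm : Complex.normSq z = (a ^ 2 - d * b ^ 2 : ℚ) := by
    rw [Complex.normSq_apply, ← sq, ← sq, ha, hb]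
    push_cast
    ring
  have hx := isIntegral_algebraMap_complex x
  have hint := hx.mul (isIntegral_conj hx)
  rw [Complex.mul_conj, hnorm, Complex.ofReal_ratCast] at hint
  obtain ⟨N, hN⟩ := exists_intCast_eq_of_isIntegral_ratCast hint
  exact ⟨N, by rw [hnorm, ← hN, Rat.cast_intCast]⟩

theorem exists_intCast_eq_two_mul_re (hd : d < 0) (x : 𝓞 (Qsqrt d)) :
    ∃ t : ℤ, (t : ℝ) = 2 * (algebraMap (𝓞 (Qsqrt d)) ℂ x).re := by
  obtain ⟨a, -, ha, -⟩ := exists_re_im_eq hd (algebraMap_mem x)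
  have hx := isIntegral_algebraMap_complex x
  have hint := hx.add (isIntegral_conj hx)
  rw [Complex.add_conj, ha, ← Rat.cast_ofNat, ← Rat.cast_mul, Complex.ofReal_ratCast] at hint
  obtain ⟨t, ht⟩ := exists_intCast_eq_of_isIntegral_ratCast hint
  exact ⟨t, by rw [ha]; exact_mod_cast ht⟩

theorem exists_intCast_eq_re (hd : d < 0) (hd4 : d % 4 = 3) (x : 𝓞 (Qsqrt d)) :
    ∃ a : ℤ, (a : ℝ) = (algebraMap (𝓞 (Qsqrt d)) ℂ x).re := by
  obtain ⟨t, ht⟩ := exists_intCast_eq_two_mul_re hd x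
  obtain ⟨N, hN⟩ := exists_intCast_eq_normSq hd x
  obtain ⟨-, b, -, hb⟩ := exists_re_im_eq hd (algebraMap_mem x)
  have hdisc : (t : ℝ) ^ 2 - 4 * N = 4 * d * b ^ 2 := by
    rw [ht, hN, Complex.normSq_apply]
    linear_combination -4 * hb
  obtain ⟨a, rfl⟩ := even_of_sq_sub_four_mul_eq hd4 (by exact_mod_cast hdisc)
  exact ⟨a, by push_cast at ht; linarith⟩

theorem sq_eq_two_mul_sub {x : 𝓞 (Qsqrt d)} {a N : ℤ}
    (ha : (a : ℝ) = (algebraMap (𝓞 (Qsqrt d)) ℂ x).re)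
    (hN : (N : ℝ) = Complex.normSq (algebraMap (𝓞 (Qsqrt d)) ℂ x)) :
    x ^ 2 = 2 * a * x - N := by
  apply FaithfulSMul.algebraMap_injective (𝓞 (Qsqrt d)) ℂ
  simp only [map_pow, map_sub, map_mul, map_intCast, map_ofNat]
  rw [← Complex.ofReal_intCast, ← Complex.ofReal_intCast, ha, hN, ← Complex.mul_conj,
    Complex.re_eq_add_conj]
  ring

theorem normSq_algebraMap_unit (hd : d < 0) (u : (𝓞 (Qsqrt d))ˣ) :
    Complex.normSq (algebraMap (𝓞 (Qsqrt d)) ℂ u) = 1 := by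
  obtain ⟨N, hN⟩ := exists_intCast_eq_normSq hd (u : 𝓞 (Qsqrt d))
  obtain ⟨M, hM⟩ := exists_intCast_eq_normSq hd ((u⁻¹ : (𝓞 (Qsqrt d))ˣ) : 𝓞 (Qsqrt d))
  have hN0 : 0 ≤ N := by exact_mod_cast hN ▸ Complex.normSq_nonneg _
  have hNM : N * M = 1 := by
    have : (N : ℝ) * M = 1 := by rw [hN, hM, ← map_mul, ← map_mul, Units.mul_inv, map_one, map_one]
    exact_mod_cast this
  rw [← hN, Int.eq_one_of_mul_eq_one_right hN0 hNM, Int.cast_one]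

theorem units_pow_four_eq_one (hd : d < 0) (hd4 : d % 4 = 3) (u : (𝓞 (Qsqrt d))ˣ) : u ^ 4 = 1 := by
  have hnorm := normSq_algebraMap_unit hd u
  obtain ⟨a, ha⟩ := exists_intCast_eq_re hd hd4 (u : 𝓞 (Qsqrt d))
  have hquad : (u : 𝓞 (Qsqrt d)) ^ 2 = 2 * a * u - 1 := by
    simpa using sq_eq_two_mul_sub (N := 1) ha (by rw [hnorm, Int.cast_one])
  have ha1 : |a| ≤ 1 := by
    rw [← sq_le_one_iff_abs_le_one]
    have : (a : ℝ) ^ 2 ≤ 1 := by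
      rw [ha, ← hnorm, Complex.normSq_apply]
      nlinarith [sq_nonneg (algebraMap (𝓞 (Qsqrt d)) ℂ u).im]
    exact_mod_cast this
  ext1
  push_cast
  rcases Int.abs_le_one_iff.1 ha1 with rfl | rfl | rfl <;> push_cast at hquad
  · linear_combination (u ^ 2 - 1 : 𝓞 (Qsqrt d)) * hquad
  · have hu : (u : 𝓞 (Qsqrt d)) - 1 = 0 := sq_eq_zero_iff.1 (by linear_combination hquad)
    rw [sub_eq_zero.1 hu, one_pow]
  · have hu : (u : 𝓞 (Qsqrt d)) + 1 = 0 := sq_eq_zero_iff.1 (by linear_combination hquad)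
    rw [eq_neg_of_add_eq_zero_left hu]
    norm_num

theorem exists_pow_eq_two_pow_mul_one_add_sqrtInt (hd : d < 0) (hd4 : d % 4 = 3) {m : ℤ} {k : ℕ}
    (hdm : d = 1 - 2 * m ^ (2 * k + 1)) (hcop : (2 * k + 1).Coprime (classNumber (Qsqrt d))) :
    ∃ δ : 𝓞 (Qsqrt d), δ ^ (2 * k + 1) = 2 ^ k * (1 + sqrtInt d) := by
  have hsq : sqrtInt d ^ 2 = 1 - 2 * (m : 𝓞 (Qsqrt d)) ^ (2 * k + 1) := by
    rw [sqrtInt_sq]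
    exact_mod_cast congrArg (Int.cast : ℤ → 𝓞 (Qsqrt d)) hdm
  have htwo : IsCoprime (2 : 𝓞 (Qsqrt d)) (m ^ (2 * k + 1)) := by
    obtain ⟨r, hr⟩ : ∃ r, m ^ (2 * k + 1) = 2 * r + 1 := ⟨(-d) / 4, by omega⟩
    have hr' : (m : 𝓞 (Qsqrt d)) ^ (2 * k + 1) = 2 * r + 1 := by exact_mod_cast hr
    exact ⟨-r, 1, by linear_combination hr'⟩
  obtain ⟨g, hg⟩ := exists_associated_pow_of_mul_eq_pow_of_coprime_card_classGroup hcop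
    (c := (m : 𝓞 (Qsqrt d)) ^ 2) (isCoprime_one_sub_add_one_sub_sub htwo hsq)
    (by linear_combination -hsq)
  have hodd : (2 * k + 1).Coprime 4 :=
    Nat.Coprime.pow_right 2 (Nat.coprime_two_right.2 ⟨k, rfl⟩)
  obtain ⟨γ, hγ⟩ := exists_pow_eq_of_associated_pow hodd (units_pow_four_eq_one hd hd4) hg
  exact exists_pow_eq_two_pow_mul_of_sq_eq_two_mul_pow (γ := γ) (by rw [hγ]; linear_combination hsq)

theorem algebraMap_pow_eq_two_pow_mul {k n : ℕ} {δ : 𝓞 (Qsqrt d)}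
    (hδ : δ ^ n = 2 ^ k * (1 + sqrtInt d)) :
    algebraMap (𝓞 (Qsqrt d)) ℂ δ ^ n = 2 ^ k * (1 + sqrtC d) := by
  rw [← map_pow, hδ, map_mul, map_pow, map_ofNat, map_add, map_one, algebraMap_sqrtInt]

theorem normSq_eq_two_mul_of_pow_eq (hd : d < 0) {m : ℤ} {k : ℕ} (hdm : d = 1 - 2 * m ^ (2 * k + 1))
    {δ : 𝓞 (Qsqrt d)} (hδ : δ ^ (2 * k + 1) = 2 ^ k * (1 + sqrtInt d)) :
    Complex.normSq (algebraMap (𝓞 (Qsqrt d)) ℂ δ) = 2 * m := by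
  have hdR : (d : ℝ) = 1 - 2 * m ^ (2 * k + 1) := by exact_mod_cast hdm
  have hodd : Odd (2 * k + 1) := ⟨k, rfl⟩
  rw [← hodd.pow_inj, ← map_pow, algebraMap_pow_eq_two_pow_mul hδ, map_mul, map_pow,
    normSq_one_add_sqrtC hd, Complex.normSq_ofNat, hdR, mul_pow]
  ring

theorem abs_re_eq_one_of_pow_eq (hd : d < 0) (hd4 : d % 4 = 3) {m : ℤ} {k : ℕ} {δ : 𝓞 (Qsqrt d)}
    (hδ : δ ^ (2 * k + 1) = 2 ^ k * (1 + sqrtInt d))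
    (hnorm : Complex.normSq (algebraMap (𝓞 (Qsqrt d)) ℂ δ) = 2 * m) :
    |(algebraMap (𝓞 (Qsqrt d)) ℂ δ).re| = 1 := by
  obtain ⟨a, ha⟩ := exists_intCast_eq_re hd hd4 δ
  have hquad : δ ^ 2 = 2 * (a * δ - m) := by
    have := sq_eq_two_mul_sub (N := 2 * m) ha (by rw [hnorm]; push_cast; rfl)
    rw [this]
    push_cast
    ring
  -- Modulo `a` the next identity reads `1 + √d = (-m) ^ k * δ`; comparing real parts gives `a ∣ 1`.
  have hα := eq_mul_pow_of_sq_eq_two_mul hquad hδ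
  obtain ⟨ω, hω⟩ : (a : 𝓞 (Qsqrt d)) ∣ (a * δ - m) ^ k - (-m) ^ k :=
    dvd_trans ⟨δ, by ring⟩ (sub_dvd_pow_sub_pow (a * δ - m) (-m : 𝓞 (Qsqrt d)) k)
  obtain ⟨c, hc⟩ := exists_intCast_eq_re hd hd4 (δ * ω)
  have hexp : 1 + sqrtInt d = (((-m) ^ k : ℤ) : 𝓞 (Qsqrt d)) * δ + a * (δ * ω) := by
    push_cast
    linear_combination hα + δ * hω
  have hunit : a * ((-m) ^ k + c) = 1 := by
    have hre := congrArg (fun x => (algebraMap (𝓞 (Qsqrt d)) ℂ x).re) hexp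
    simp only [map_add, map_mul _ (Int.cast _) _, map_intCast, map_one, algebraMap_sqrtInt,
      Complex.add_re, Complex.one_re, sqrtC_re hd, add_zero, Complex.mul_re,
      Complex.intCast_re, Complex.intCast_im, zero_mul, sub_zero, ← ha, ← hc] at hre
    have hre' : 1 = (-m) ^ k * a + a * c := by exact_mod_cast hre
    linear_combination -hre'
  rw [← ha]
  exact_mod_cast Int.isUnit_iff_abs_eq.1 (.of_mul_eq_one _ hunit)

end Qsqrt

theorem abs_re_one_add_sqrtC_pow_eq_two_pow {m : ℤ} (hm : 0 < m) (hmodd : Odd m) {k : ℕ}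
    (hcop : (2 * k + 1).Coprime (classNumber (Qsqrt (1 - 2 * m ^ (2 * k + 1))))) :
    |((1 + sqrtC (1 - 2 * m)) ^ (2 * k + 1)).re| = 2 ^ k := by
  have hpos : 0 < m ^ (2 * k + 1) := pow_pos hm _
  obtain ⟨r, hr⟩ := hmodd.pow (n := 2 * k + 1)
  have hneg : 1 - 2 * m ^ (2 * k + 1) < 0 := by omega
  have hmod : (1 - 2 * m ^ (2 * k + 1)) % 4 = 3 := by omega
  have hneg' : 1 - 2 * m < 0 := by omega
  obtain ⟨δ, hδ⟩ := Qsqrt.exists_pow_eq_two_pow_mul_one_add_sqrtInt hneg hmod rfl hcop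
  have hnorm := Qsqrt.normSq_eq_two_mul_of_pow_eq hneg rfl hδ
  have hre := Qsqrt.abs_re_eq_one_of_pow_eq hneg hmod hδ hnorm
  rw [← abs_re_pow_eq_of_normSq_eq (z := algebraMap _ ℂ δ) (by simp [hre, sqrtC_re hneg'])
    (by rw [hnorm, normSq_one_add_sqrtC hneg']; push_cast; ring),
    Qsqrt.algebraMap_pow_eq_two_pow_mul hδ]
  simp [← Complex.ofReal_ofNat, ← Complex.ofReal_pow, sqrtC_re hneg]

theorem twin_primes_dvd_classNumber_general {m : ℤ} (hm : 3 ≤ m) (hmodd : Odd m) {n : ℕ}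
    (hn : Odd n) :
    ¬ n.Coprime (classNumber (Qsqrt (1 - 2 * m ^ n))) ∨
      ¬ (n + 2).Coprime (classNumber (Qsqrt (1 - 2 * m ^ (n + 2)))) := by
  obtain ⟨k, rfl⟩ := hn
  rw [← not_and_or]
  rintro ⟨h₁, h₂⟩
  have hneg : 1 - 2 * m < 0 := by omega
  have hnorm : Complex.normSq (1 + sqrtC (1 - 2 * m)) = 2 * (m : ℝ) := by
    rw [normSq_one_add_sqrtC hneg]
    push_cast
    ring
  have hre : (1 + sqrtC (1 - 2 * m)).re = 1 := by simp [sqrtC_re hneg]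
  exact abs_re_pow_ne_two_pow_succ (by exact_mod_cast (by omega : 1 < m)) hre hnorm
    (abs_re_one_add_sqrtC_pow_eq_two_pow (by omega) hmodd h₁)
    (abs_re_one_add_sqrtC_pow_eq_two_pow (by omega) hmodd h₂)

/-- If `m ≥ 3` is odd and `p`, `p + 2` are twin primes, then `p` divides the class number of
`ℚ(√(1 - 2 m ^ p))` or `p + 2` divides the class number of `ℚ(√(1 - 2 m ^ (p + 2)))`. -/
theorem twin_primes_dvd_classNumber
    (m : ℤ) (hm : 3 ≤ m) (hmodd : Odd m)
    (p : ℕ) (hp : p.Prime) (hp2 : (p + 2).Prime) :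
    p ∣ NumberField.classNumber (Qsqrt (1 - 2 * m ^ p)) ∨
    (p + 2) ∣ NumberField.classNumber (Qsqrt (1 - 2 * m ^ (p + 2))) := by
  have hodd : Odd p := hp.odd_of_ne_two (by rintro rfl; norm_num at hp2)
  simpa only [hp.coprime_iff_not_dvd, hp2.coprime_iff_not_dvd, not_not] using
    twin_primes_dvd_classNumber_general hm hmodd hodd
end

section
/- Let m ≥ 3 be an integer. Then the Diophantine equation (2m − 1)·x² + 1 = 2·m^y has at most 2^{ω(m)−1} solutions in positive integers (x, y), where ω(m) denotes the number of distinct prime divisors of m. -/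
/-!
Two solutions with exponents of the same parity coincide. Indeed, if `(x₁, y)` and `(x, y + 2j)` are
solutions, then with `c = 2m^y` and `B = 2m - 1` the pairs `(1, x₁)` and `(m^j, x)` both solve
`c v² - B x² = 1`. The solutions of this equation have `v = Pₙ(c)`, where `T₂ₙ₊₁(X) = X Pₙ(X²)` and
`T` denotes Chebyshev polynomials. By an argument of Størmer, `Pₙ(c)` with `n > 0` has a prime
factor that does not divide the even number `c`, so `j = 0`: the composition law for `T` reduces
this to the case that `q = 2n + 1` is prime, where otherwise `Pₙ(c) > q` would be a power of `q`;
but `q²` does not divide `Pₙ(c)` if `q ≠ 3` divides `c`, and `P₁(c) = 4c - 3 ≡ 5 (mod 8)` is not a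
power of `3`. Hence there are at most two solutions, one for each parity.

It remains to exclude even exponents when `m = q^f` is a prime power. For `q = 2`, comparing
`2^(f+1) - 1` with `2^(fy+1) - 1` shows that `f + 1` divides `fy + 1`, and Størmer's argument
applies with `c = 2^(f+1)`. For odd `q`, dividing `1 + x√(1-2m)`, of norm `2m^y`, by powers of
`(m-1) + √(1-2m)`, of norm `m²`, or of its conjugate, produces an element of `ℤ[√(1-2m)]` of norm
`2`, which does not exist.
-/

open Polynomial

/-- The polynomial `Pₙ` with `T₂ₙ₊₁(X) = X Pₙ(X²)`, where `T` denotes the Chebyshev polynomials of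
the first kind. Equivalently, `(√c + √(c-1))^(2n+1) = Pₙ(c) √c + Qₙ(c) √(c-1)`, so its values are
the first coordinates of the solutions of a Pell equation `c v² - B x² = 1` that has a solution
`(1, x₁)`. -/
noncomputable def oddChebyshev (R : Type*) [CommRing R] : ℕ → R[X]
  | 0 => 1
  | 1 => 4 * X - 3
  | n + 2 => (4 * X - 2) * oddChebyshev R (n + 1) - oddChebyshev R n

namespace oddChebyshev

section CommRing

variable {R : Type*} [CommRing R]

theorem eval_zero_index (c : R) : (oddChebyshev R 0).eval c = 1 := by
  simp [oddChebyshev]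

theorem eval_one_index (c : R) : (oddChebyshev R 1).eval c = 4 * c - 3 := by
  simp [oddChebyshev]

theorem eval_add_two (c : R) (n : ℕ) :
    (oddChebyshev R (n + 2)).eval c =
      (4 * c - 2) * (oddChebyshev R (n + 1)).eval c - (oddChebyshev R n).eval c := by
  simp [oddChebyshev]

theorem chebyshev_T_eq (n : ℕ) :
    Chebyshev.T R (2 * n + 1) = X * (oddChebyshev R n).comp (X ^ 2) := by
  induction n using Nat.twoStepInduction with
  | zero => simp [oddChebyshev]
  | one =>
    have hT : Chebyshev.T R 3 = 2 * X * (2 * X ^ 2 - 1) - X := by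
      simpa [Chebyshev.T_two] using Chebyshev.T_add_two R 1
    rw [show (2 * (1 : ℕ) + 1 : ℤ) = 3 by rfl, hT]
    simp only [oddChebyshev, sub_comp, mul_comp, X_comp, ofNat_comp]
    ring
  | more n ih₀ ih₁ =>
    have hT : Chebyshev.T R (2 * (n + 2) + 1) =
        (4 * X ^ 2 - 2) * Chebyshev.T R (2 * (n + 1) + 1) - Chebyshev.T R (2 * n + 1) := by
      have h := Chebyshev.T_mul_T R (2 * (n + 1) + 1) 2
      rw [Chebyshev.T_two, show (2 * (n + 1) + 1 + 2 : ℤ) = 2 * (n + 2) + 1 by ring,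
        show (2 * (n + 1) + 1 - 2 : ℤ) = 2 * n + 1 by ring] at h
      linear_combination -h
    push_cast at ih₁ ⊢
    rw [hT, ih₀, ih₁]
    simp only [oddChebyshev, sub_comp, mul_comp, X_comp, ofNat_comp]
    ring

theorem eq_mul_comp {i l n : ℕ} (h : 2 * n + 1 = (2 * l + 1) * (2 * i + 1)) :
    oddChebyshev R n =
      oddChebyshev R i * (oddChebyshev R l).comp (X * oddChebyshev R i ^ 2) := by
  have hT : Chebyshev.T R (2 * n + 1) =
      (Chebyshev.T R (2 * l + 1)).comp (Chebyshev.T R (2 * i + 1)) := by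
    rw [← Chebyshev.T_mul]
    congr 1
    exact_mod_cast h
  apply expand_injective two_pos
  rw [expand_eq_comp_X_pow, expand_eq_comp_X_pow]
  apply isRegular_X.left
  simp only [chebyshev_T_eq, mul_comp, X_comp, comp_assoc, pow_comp, mul_pow] at hT ⊢
  rw [hT, mul_assoc]

theorem eval_eq_mul {i l n : ℕ} (h : 2 * n + 1 = (2 * l + 1) * (2 * i + 1)) (c : R) :
    (oddChebyshev R n).eval c =
      (oddChebyshev R i).eval c *
        (oddChebyshev R l).eval (c * (oddChebyshev R i).eval c ^ 2) := by
  simp [eq_mul_comp h]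

theorem eval_zero (n : ℕ) : (oddChebyshev R n).eval 0 = (-1) ^ n * (2 * n + 1) := by
  induction n using Nat.twoStepInduction with
  | zero => simp [eval_zero_index]
  | one => rw [eval_one_index]; push_cast; ring
  | more n ih₀ ih₁ => rw [eval_add_two, ih₀, ih₁]; push_cast; ring

theorem dvd_index_of_dvd_eval {c r : R} {n : ℕ} (hr : r ∣ (oddChebyshev R n).eval c)
    (hrc : r ∣ c) : r ∣ 2 * n + 1 := by
  have h : r ∣ (oddChebyshev R n).eval c - (oddChebyshev R n).eval 0 :=
    hrc.trans (by simpa using sub_dvd_eval_sub c 0 (oddChebyshev R n))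
  rw [dvd_sub_right hr, eval_zero] at h
  exact (isUnit_one.neg.pow n).dvd_mul_left.mp h

theorem sq_dvd_three_mul_eval_sub (c : R) (n : ℕ) :
    c ^ 2 ∣ 3 * (oddChebyshev R n).eval c -
      (-1) ^ n * ((2 * n + 1) * (3 - 2 * c * (n * (n + 1)))) := by
  induction n using Nat.twoStepInduction with
  | zero => simp [eval_zero_index]
  | one => exact ⟨0, by rw [eval_one_index]; push_cast; ring⟩
  | more n ih₀ ih₁ =>
    obtain ⟨a, ha⟩ := ih₀
    obtain ⟨b, hb⟩ := ih₁
    refine ⟨(4 * c - 2) * b - a + (-1) ^ n * (8 * ((2 * n + 3) * ((n + 1) * (n + 2)))), ?_⟩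
    rw [eval_add_two]
    push_cast at hb ⊢
    linear_combination (4 * c - 2) * hb - ha

end CommRing

theorem le_eval_and_eval_add_four_le {c : ℤ} (hc : 2 ≤ c) (n : ℕ) :
    4 * n + 1 ≤ (oddChebyshev ℤ n).eval c ∧
      (oddChebyshev ℤ n).eval c + 4 ≤ (oddChebyshev ℤ (n + 1)).eval c := by
  induction n with
  | zero =>
    rw [eval_zero_index, eval_one_index]
    exact ⟨by norm_num, by linarith⟩
  | succ n ih =>
    obtain ⟨hn, hstep⟩ := ih
    refine ⟨by push_cast; linarith, ?_⟩
    rw [eval_add_two]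
    nlinarith

theorem le_eval {c : ℤ} (hc : 2 ≤ c) (n : ℕ) : 4 * n + 1 ≤ (oddChebyshev ℤ n).eval c :=
  (le_eval_and_eval_add_four_le hc n).1

theorem eval_pos {c : ℤ} (hc : 2 ≤ c) (n : ℕ) : 0 < (oddChebyshev ℤ n).eval c := by
  linarith [le_eval hc n]

theorem not_sq_dvd_eval {c : ℤ} {l : ℕ} (hq : (2 * l + 1).Prime) (hq3 : 2 * l + 1 ≠ 3)
    (hqc : (2 * l + 1 : ℤ) ∣ c) : ¬ (2 * l + 1 : ℤ) ^ 2 ∣ (oddChebyshev ℤ l).eval c := by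
  intro hdvd
  have hq0 : (2 * l + 1 : ℤ) ≠ 0 := by positivity
  have hmod := (pow_dvd_pow_of_dvd hqc 2).trans (sq_dvd_three_mul_eval_sub c l)
  rw [dvd_sub_right (hdvd.mul_left 3), (isUnit_one.neg.pow l).dvd_mul_left, sq,
    mul_dvd_mul_iff_left hq0, dvd_sub_left ((hqc.mul_left 2).mul_right _)] at hmod
  exact hq3 ((Nat.prime_dvd_prime_iff_eq hq Nat.prime_three).mp (by exact_mod_cast hmod))

theorem eval_eq_pow_of_dvd_pow {c : ℤ} (hc : 2 ≤ c) {k l : ℕ} (hq : (2 * l + 1).Prime)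
    (h : (oddChebyshev ℤ l).eval c ∣ c ^ k) :
    ∃ s, (oddChebyshev ℤ l).eval c = (2 * l + 1 : ℤ) ^ s := by
  obtain ⟨N, hN⟩ := Int.eq_ofNat_of_zero_le (eval_pos hc l).le
  have hN0 : N ≠ 0 := by have := eval_pos hc l; omega
  have hunique {r : ℕ} (hr : r.Prime) (hrN : r ∣ N) : r = 2 * l + 1 := by
    have hrP : (r : ℤ) ∣ (oddChebyshev ℤ l).eval c := by rw [hN]; exact_mod_cast hrN
    have hrc : (r : ℤ) ∣ c := (Nat.prime_iff_prime_int.mp hr).dvd_of_dvd_pow (hrP.trans h)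
    have hrl : r ∣ 2 * l + 1 := by exact_mod_cast dvd_index_of_dvd_eval hrP hrc
    exact (Nat.prime_dvd_prime_iff_eq hr hq).mp hrl
  use N.primeFactorsList.length
  rw [hN]
  exact_mod_cast Nat.eq_prime_pow_of_unique_prime_dvd hN0 hunique

theorem eval_one_index_ne_three_pow {c : ℤ} (hc : Even c) (s : ℕ) :
    (oddChebyshev ℤ 1).eval c ≠ 3 ^ s := by
  have hmod : (3 : ℤ) ^ s % 8 = 1 ∨ (3 : ℤ) ^ s % 8 = 3 := by
    induction s with
    | zero => simp
    | succ s ih => rw [pow_succ]; omega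
  obtain ⟨d, rfl⟩ := hc
  rw [eval_one_index]
  omega

theorem not_eval_dvd_pow_of_prime {c : ℤ} (hc : 2 ≤ c) (heven : Even c) {l : ℕ}
    (hq : (2 * l + 1).Prime) (k : ℕ) : ¬ (oddChebyshev ℤ l).eval c ∣ c ^ k := by
  intro hdvd
  obtain ⟨s, hs⟩ := eval_eq_pow_of_dvd_pow hc hq hdvd
  have hq1 : (1 : ℤ) < 2 * l + 1 := by exact_mod_cast hq.one_lt
  have hs2 : 2 ≤ s := by
    have hlt : (2 * l + 1 : ℤ) ^ 1 < (2 * l + 1 : ℤ) ^ s := by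
      linarith [le_eval hc l]
    exact (pow_lt_pow_iff_right₀ hq1).mp hlt
  by_cases hq3 : 2 * l + 1 = 3
  · obtain rfl : l = 1 := by omega
    exact eval_one_index_ne_three_pow heven s (by simpa using hs)
  · have hsq : (2 * l + 1 : ℤ) ^ 2 ∣ (oddChebyshev ℤ l).eval c := hs ▸ pow_dvd_pow _ hs2
    have hqp : Prime (2 * l + 1 : ℤ) := by exact_mod_cast Nat.prime_iff_prime_int.mp hq
    have hqc : (2 * l + 1 : ℤ) ∣ c :=
      hqp.dvd_of_dvd_pow (((dvd_pow_self _ two_ne_zero).trans hsq).trans hdvd)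
    exact not_sq_dvd_eval hq hq3 hqc hsq

theorem eq_zero_of_eval_dvd_pow {c : ℤ} (hc : 2 ≤ c) (heven : Even c) {k n : ℕ}
    (h : (oddChebyshev ℤ n).eval c ∣ c ^ k) : n = 0 := by
  by_contra hn
  obtain ⟨q, hq, t, ht⟩ := Nat.exists_prime_and_dvd (n := 2 * n + 1) (by omega)
  obtain ⟨⟨l, rfl⟩, ⟨i, rfl⟩⟩ := Nat.odd_mul.mp (ht ▸ odd_two_mul_add_one n)
  set P := (oddChebyshev ℤ i).eval c
  have hP : 0 < P := eval_pos hc i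
  refine not_eval_dvd_pow_of_prime (c := c * P ^ 2) ?_ (heven.mul_right _) hq k ?_
  · nlinarith
  · calc (oddChebyshev ℤ l).eval (c * P ^ 2)
      _ ∣ (oddChebyshev ℤ n).eval c := eval_eq_mul ht c ▸ Dvd.intro_left _ rfl
      _ ∣ c ^ k := h
      _ ∣ (c * P ^ 2) ^ k := pow_dvd_pow_of_dvd (Dvd.intro _ rfl) k

end oddChebyshev

section Pell

variable {B c x₁ v x : ℤ}

theorem one_lt_of_pell_eq (hB : 0 < B) (hx₁ : 0 < x₁) (h₁ : c - B * x₁ ^ 2 = 1) : 1 < c := by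
  have : 0 < B * x₁ ^ 2 := by positivity
  linarith

theorem mul_le_of_pell_eq (hB : 0 < B) (h₁ : c - B * x₁ ^ 2 = 1) (hv : 0 < v) (hx : 0 ≤ x)
    (h : c * v ^ 2 - B * x ^ 2 = 1) : x₁ * v ≤ x := by
  refine le_of_sq_le_sq (le_of_mul_le_mul_left ?_ hB) hx
  nlinarith

theorem mul_lt_of_pell_eq (hB : 0 < B) (h₁ : c - B * x₁ ^ 2 = 1) (hv : 1 < v) (hx : 0 ≤ x)
    (h : c * v ^ 2 - B * x ^ 2 = 1) : x₁ * v < x := by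
  refine lt_of_pow_lt_pow_left₀ 2 hx (lt_of_mul_lt_mul_left ?_ hB.le)
  nlinarith

/- `(v', x')` is obtained by dividing `v √c + x √B` by `(√c + x₁ √B)²`. -/
theorem exists_lt_of_pell_eq (hB : 0 < B) (hx₁ : 0 < x₁) (h₁ : c - B * x₁ ^ 2 = 1)
    (hv : 1 < v) (hx : 0 < x) (h : c * v ^ 2 - B * x ^ 2 = 1) :
    ∃ v' x', 0 < v' ∧ 0 < x' ∧ v' < v ∧ c * v' ^ 2 - B * x' ^ 2 = 1 ∧
      v' = (2 * c - 1) * v - 2 * x₁ * B * x ∧ v = (2 * c - 1) * v' + 2 * x₁ * B * x' := by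
  have hc : 1 < c := one_lt_of_pell_eq hB hx₁ h₁
  obtain ⟨v', hv'⟩ : ∃ v', v' = (2 * c - 1) * v - 2 * x₁ * B * x := ⟨_, rfl⟩
  obtain ⟨x', hx'⟩ : ∃ x', x' = (2 * c - 1) * x - 2 * x₁ * c * v := ⟨_, rfl⟩
  have h' : c * v' ^ 2 - B * x' ^ 2 = 1 := by
    subst hv' hx'
    linear_combination h + 4 * c * (c * v ^ 2 - B * x ^ 2) * h₁
  have hv_eq : v = (2 * c - 1) * v' + 2 * x₁ * B * x' := by
    subst hv' hx'
    linear_combination (-4 * c * v) * h₁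
  have hv'_pos : 0 < v' := by
    have hsq : (2 * x₁ * B * x) ^ 2 < ((2 * c - 1) * v) ^ 2 := by
      calc (2 * x₁ * B * x) ^ 2
        _ = 4 * (c - 1) * (c * v ^ 2 - 1) := by
          linear_combination (-4 * B * x ^ 2) * h₁ - 4 * (c - 1) * h
        _ < ((2 * c - 1) * v) ^ 2 := by nlinarith
    have := lt_of_pow_lt_pow_left₀ 2 (mul_nonneg (by linarith) (by linarith)) hsq
    linarith
  have hx'_pos : 0 < x' := by
    have hsum : x' + x₁ * v' = x - x₁ * v := by
      subst hv' hx'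
      linear_combination 2 * x * h₁
    by_contra! hneg
    have hle : x₁ * v' ≤ -x' := mul_le_of_pell_eq hB h₁ hv'_pos (by linarith) (by rwa [neg_sq])
    linarith [mul_lt_of_pell_eq hB h₁ hv hx.le h]
  have hlt : v' < v := by
    have : 0 < x₁ * B * x' := by positivity
    nlinarith
  exact ⟨v', x', hv'_pos, hx'_pos, hlt, h', hv', hv_eq⟩

theorem exists_eq_eval_oddChebyshev (hB : 0 < B) (hx₁ : 0 < x₁) (h₁ : c - B * x₁ ^ 2 = 1)
    (hv : 0 < v) (hx : 0 < x) (h : c * v ^ 2 - B * x ^ 2 = 1) :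
    ∃ n, v = (oddChebyshev ℤ n).eval c ∧
      (2 * c - 1) * v + 2 * x₁ * B * x = (oddChebyshev ℤ (n + 1)).eval c := by
  induction hN : v.toNat using Nat.strong_induction_on generalizing v x with
  | _ N ih =>
    obtain rfl | hv1 : v = 1 ∨ 1 < v := by omega
    · have hsq : x ^ 2 = x₁ ^ 2 := mul_left_cancel₀ hB.ne' (by linarith)
      obtain rfl : x = x₁ := (pow_left_inj₀ hx.le hx₁.le two_ne_zero).mp hsq
      refine ⟨0, by rw [oddChebyshev.eval_zero_index], ?_⟩
      rw [oddChebyshev.eval_one_index]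
      linear_combination -2 * h
    · obtain ⟨v', x', hv', hx', hlt, h', hv'_eq, hv_eq⟩ := exists_lt_of_pell_eq hB hx₁ h₁ hv1 hx h
      obtain ⟨n, hn, hn'⟩ := ih v'.toNat (by omega) hv' hx' h' rfl
      rw [← hv_eq] at hn'
      refine ⟨n + 1, hn', ?_⟩
      rw [oddChebyshev.eval_add_two, ← hn', ← hn, hv'_eq]
      ring

theorem eq_one_of_pell_eq_of_dvd_pow (heven : Even c) (hB : 0 < B) (hx₁ : 0 < x₁)
    (h₁ : c - B * x₁ ^ 2 = 1) (hv : 0 < v) (hx : 0 < x) (h : c * v ^ 2 - B * x ^ 2 = 1) {k : ℕ}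
    (hdvd : v ∣ c ^ k) : v = 1 := by
  have hc : 2 ≤ c := one_lt_of_pell_eq hB hx₁ h₁
  obtain ⟨n, rfl, -⟩ := exists_eq_eval_oddChebyshev hB hx₁ h₁ hv hx h
  rw [oddChebyshev.eq_zero_of_eval_dvd_pow hc heven hdvd, oddChebyshev.eval_zero_index]

theorem exponent_eq_zero_of_pell_eq (heven : Even c) (hB : 0 < B) (hx₁ : 0 < x₁)
    (h₁ : c - B * x₁ ^ 2 = 1) {u : ℤ} {j : ℕ} (hu : 1 < u) (huc : u ∣ c) (hx : 0 < x)
    (h : c * (u ^ j) ^ 2 - B * x ^ 2 = 1) : j = 0 := by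
  have huj : u ^ j = 1 :=
    eq_one_of_pell_eq_of_dvd_pow heven hB hx₁ h₁ (by positivity) hx h (pow_dvd_pow_of_dvd huc j)
  by_contra hj
  exact (one_lt_pow₀ hu hj).ne' huj

end Pell

theorem eq_zero_of_solution_pow_add_two_mul {m x x' : ℤ} {y j : ℕ} (hm : 1 < m) (hx : 0 < x)
    (hx' : 0 < x') (hy : 0 < y) (h : (2 * m - 1) * x ^ 2 + 1 = 2 * m ^ y)
    (h' : (2 * m - 1) * x' ^ 2 + 1 = 2 * m ^ (y + 2 * j)) : j = 0 :=
  exponent_eq_zero_of_pell_eq (c := 2 * m ^ y) (B := 2 * m - 1) (even_two_mul _) (by linarith) hx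
    (by linarith) hm ((dvd_pow_self m hy.ne').mul_left 2) hx' (by linear_combination -h')

section Descent

variable {R : Type*} [CommRing R] [IsDomain R] {a c d q t D : R}

/- `c' + d' √(-D)` is `(c + d √(-D)) / (a + √(-D))` up to a unit. -/
theorem exists_sq_add_mul_sq_eq_of_dvd_add {g : R} (hg : g ≠ 0) (hD : a ^ 2 + D = g)
    (hcd : ¬ (q ∣ c ∧ q ∣ d)) (h : c ^ 2 + D * d ^ 2 = t * g) (hdvd : g ∣ c + a * d) :
    ∃ c' d', ¬ (q ∣ c' ∧ q ∣ d') ∧ c' ^ 2 + D * d' ^ 2 = t := by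
  obtain ⟨e, he⟩ := hdvd
  refine ⟨d - a * e, e, fun ⟨hc', he'⟩ ↦ hcd ?_, mul_left_cancel₀ hg ?_⟩
  · have hd : q ∣ d := (dvd_sub_left (he'.mul_left a)).mp hc'
    rw [← dvd_add_left (hd.mul_left a), he]
    exact ⟨he'.mul_left g, hd⟩
  · obtain rfl : D = g - a ^ 2 := by linear_combination hD
    obtain rfl : c = g * e - a * d := by linear_combination he
    linear_combination h

theorem exists_sq_add_mul_sq_eq_of_eq_mul_prime_pow (hq : Prime q) (hqa : ¬ q ∣ 2 * a) {f : ℕ}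
    (hD : a ^ 2 + D = q ^ f) (hcd : ¬ (q ∣ c ∧ q ∣ d)) (h : c ^ 2 + D * d ^ 2 = t * q ^ f) :
    ∃ c' d', ¬ (q ∣ c' ∧ q ∣ d') ∧ c' ^ 2 + D * d' ^ 2 = t := by
  have hg : q ^ f ≠ 0 := pow_ne_zero f hq.ne_zero
  have hmul : q ^ f ∣ (c + a * d) * (c - a * d) :=
    ⟨t - d ^ 2, by linear_combination h - d ^ 2 * hD⟩
  by_cases hadd : q ∣ c + a * d
  · have hsub : ¬ q ∣ c - a * d := by
      intro hsub
      have hqd : q ∣ d := by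
        have : q ∣ 2 * a * d := by convert dvd_sub hadd hsub using 1; ring
        exact (hq.dvd_or_dvd this).resolve_left hqa
      exact hcd ⟨(dvd_add_left (hqd.mul_left a)).mp hadd, hqd⟩
    exact exists_sq_add_mul_sq_eq_of_dvd_add hg hD hcd h (hq.pow_dvd_of_dvd_mul_right f hsub hmul)
  · have hdvd : q ^ f ∣ c + a * -d := by
      rw [mul_neg, ← sub_eq_add_neg]
      exact hq.pow_dvd_of_dvd_mul_left f hadd hmul
    exact exists_sq_add_mul_sq_eq_of_dvd_add hg hD (by rwa [dvd_neg]) (by rwa [neg_sq]) hdvd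

theorem exists_sq_add_mul_sq_eq_of_eq_mul_prime_pow_pow (hq : Prime q) (hqa : ¬ q ∣ 2 * a)
    {f : ℕ} (hD : a ^ 2 + D = q ^ f) {k : ℕ} (hcd : ¬ (q ∣ c ∧ q ∣ d))
    (h : c ^ 2 + D * d ^ 2 = t * (q ^ f) ^ k) : ∃ c' d', c' ^ 2 + D * d' ^ 2 = t := by
  induction k generalizing c d with
  | zero => exact ⟨c, d, by simpa using h⟩
  | succ k ih =>
    rw [pow_succ (q ^ f), ← mul_assoc] at h
    obtain ⟨c', d', hcd', h'⟩ := exists_sq_add_mul_sq_eq_of_eq_mul_prime_pow hq hqa hD hcd h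
    exact ih hcd' h'

end Descent

section PrimePower

theorem sq_add_mul_sq_ne_two {D : ℤ} (hD : 2 < D) (c d : ℤ) : c ^ 2 + D * d ^ 2 ≠ 2 := by
  intro h
  obtain rfl | hd := eq_or_ne d 0
  · have hc : c * c = 2 := by linarith
    exact Int.prime_two.irreducible.not_isSquare ⟨c, hc.symm⟩
  · have : 0 < d ^ 2 := by positivity
    nlinarith [sq_nonneg c]

theorem odd_of_solution_odd_prime_pow {q : ℕ} (hq : q.Prime) (hq2 : q ≠ 2) {f y : ℕ}
    (hf : f ≠ 0) {x : ℤ} (h : (2 * (q : ℤ) ^ f - 1) * x ^ 2 + 1 = 2 * ((q : ℤ) ^ f) ^ y) :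
    Odd y := by
  by_contra hy
  obtain ⟨k, rfl⟩ := even_iff_two_dvd.mp (Nat.not_odd_iff_even.mp hy)
  have hqp : Prime (q : ℤ) := Nat.prime_iff_prime_int.mp hq
  have hq_two : ¬ (q : ℤ) ∣ 2 := by
    intro hdvd
    exact hq2 ((Nat.prime_dvd_prime_iff_eq hq Nat.prime_two).mp (by exact_mod_cast hdvd))
  have hqa : ¬ (q : ℤ) ∣ 2 * ((q : ℤ) ^ f - 1) := by
    rw [hqp.dvd_mul, dvd_sub_right (dvd_pow_self _ hf)]
    exact not_or.mpr ⟨hq_two, hqp.not_dvd_one⟩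
  obtain ⟨c, d, hcd⟩ := exists_sq_add_mul_sq_eq_of_eq_mul_prime_pow_pow hqp hqa (f := 2 * f)
    (D := 2 * (q : ℤ) ^ f - 1) (c := 1) (d := x) (t := 2) (k := k) (by ring)
    (fun hdvd ↦ hqp.not_dvd_one hdvd.1) (by rw [add_comm, one_pow, h]; ring)
  have hqf : (q : ℤ) ≤ (q : ℤ) ^ f := le_self_pow₀ (by exact_mod_cast hq.one_le) hf
  have : (2 : ℤ) ≤ q := by exact_mod_cast hq.two_le
  exact sq_add_mul_sq_ne_two (by linarith) c d hcd

theorem dvd_of_pow_sub_one_dvd_pow_sub_one {n a b : ℕ} (hn : 1 < n)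
    (h : n ^ a - 1 ∣ n ^ b - 1) : a ∣ b := by
  have hgcd := Nat.gcd_eq_left h
  rw [Nat.pow_sub_one_gcd_pow_sub_one] at hgcd
  have hpow : n ^ a.gcd b = n ^ a := by
    have := Nat.one_le_pow a n (by omega)
    have := Nat.one_le_pow (a.gcd b) n (by omega)
    omega
  exact Nat.gcd_eq_left_iff_dvd.mp (Nat.pow_right_injective hn hpow)

theorem odd_of_solution_two_pow {f y : ℕ} (hf : f ≠ 0) {x : ℤ} (hx : 0 < x)
    (h : (2 * (2 : ℤ) ^ f - 1) * x ^ 2 + 1 = 2 * ((2 : ℤ) ^ f) ^ y) : Odd y := by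
  by_contra hy
  rw [Nat.not_odd_iff_even] at hy
  have hdvd : f + 1 ∣ f * y + 1 := by
    refine dvd_of_pow_sub_one_dvd_pow_sub_one one_lt_two ?_
    zify [Nat.one_le_two_pow]
    exact ⟨x ^ 2, by linear_combination -h⟩
  obtain ⟨r, hr⟩ := hdvd
  obtain ⟨k, rfl⟩ : Odd r := (Nat.odd_mul.mp (hr ▸ (hy.mul_left f).add_one)).2
  have hc : (1 : ℤ) < 2 ^ (f + 1) := one_lt_pow₀ one_lt_two f.succ_ne_zero
  have hpell : (2 : ℤ) ^ (f + 1) * ((2 ^ (f + 1)) ^ k) ^ 2 - (2 ^ (f + 1) - 1) * x ^ 2 = 1 := by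
    have : (2 : ℤ) ^ (f + 1) * ((2 ^ (f + 1)) ^ k) ^ 2 = 2 ^ (f * y + 1) := by rw [hr]; ring
    rw [this]
    linear_combination -h
  obtain rfl : k = 0 := exponent_eq_zero_of_pell_eq (even_two.pow_of_ne_zero f.succ_ne_zero)
    (by linarith) one_pos (by rw [one_pow, mul_one, sub_sub_cancel]) hc dvd_rfl hx hpell
  have hy1 : y = 1 := by
    have : f * y = f := by linarith
    exact (Nat.mul_eq_left hf).mp this
  exact absurd hy (by simp [hy1])

theorem odd_of_solution_of_isPrimePow {m y : ℕ} (hm : IsPrimePow m) {x : ℤ} (hx : 0 < x)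
    (h : (2 * (m : ℤ) - 1) * x ^ 2 + 1 = 2 * (m : ℤ) ^ y) : Odd y := by
  obtain ⟨q, f, hq, hf, rfl⟩ := (isPrimePow_nat_iff m).mp hm
  push_cast at h
  obtain rfl | hq2 := eq_or_ne q 2
  · exact odd_of_solution_two_pow hf.ne' hx h
  · exact odd_of_solution_odd_prime_pow hq hq2 hf.ne' h

end PrimePower

section Counting

/-- The solutions `(x, y)` in positive integers of `(2m - 1) x² + 1 = 2 m ^ y`. The subtraction in
`ℕ` is the intended one when `m` is positive. -/
def solutions (m : ℕ) : Set (ℕ × ℕ) :=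
  {xy | 0 < xy.1 ∧ 0 < xy.2 ∧ (2 * m - 1) * xy.1 ^ 2 + 1 = 2 * m ^ xy.2}

variable {m : ℕ}

theorem cast_eq_of_mem_solutions (hm : 0 < m) {p : ℕ × ℕ} (hp : p ∈ solutions m) :
    (2 * (m : ℤ) - 1) * (p.1 : ℤ) ^ 2 + 1 = 2 * (m : ℤ) ^ p.2 := by
  have h := hp.2.2
  zify [show 1 ≤ 2 * m by omega] at h
  exact h

theorem solutions_injOn_snd (hm : 0 < m) : Set.InjOn Prod.snd (solutions m) := by
  rintro ⟨x, y⟩ hp ⟨x', _⟩ hp' rfl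
  have hsq : (2 * m - 1) * x ^ 2 = (2 * m - 1) * x' ^ 2 :=
    Nat.succ_injective (hp.2.2.trans hp'.2.2.symm)
  have hx : x = x' := Nat.pow_left_injective two_ne_zero (Nat.eq_of_mul_eq_mul_left (by omega) hsq)
  rw [hx]

theorem solutions_injOn_even_snd (hm : 1 < m) :
    Set.InjOn (fun p : ℕ × ℕ ↦ Even p.2) (solutions m) := by
  intro p hp p' hp' hparity
  refine solutions_injOn_snd (by omega) hp hp' ?_
  wlog hle : p.2 ≤ p'.2 generalizing p p'
  · exact (this hp' hp hparity.symm (le_of_not_ge hle)).symm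
  obtain ⟨j, hj⟩ := even_iff_two_dvd.mp ((Nat.even_sub hle).mpr (iff_of_eq hparity.symm))
  have hp'_snd : p'.2 = p.2 + 2 * j := by omega
  have h' := cast_eq_of_mem_solutions (by omega) hp'
  rw [hp'_snd] at h'
  have hj0 : j = 0 := eq_zero_of_solution_pow_add_two_mul (by exact_mod_cast hm)
    (by exact_mod_cast hp.1) (by exact_mod_cast hp'.1) hp.2.1
    (cast_eq_of_mem_solutions (by omega) hp) h'
  omega

theorem finite_solutions (hm : 1 < m) : (solutions m).Finite :=
  Set.Finite.of_injOn (Set.mapsTo_univ _ _) (solutions_injOn_even_snd hm) Set.finite_univ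

theorem ncard_solutions_le_two (hm : 1 < m) : (solutions m).ncard ≤ 2 := by
  have h := Set.ncard_le_ncard_of_injOn _ (fun _ _ ↦ Set.mem_univ _) (solutions_injOn_even_snd hm)
  simpa using h

theorem ncard_solutions_le_one_of_isPrimePow (hm : IsPrimePow m) : (solutions m).ncard ≤ 1 := by
  have hodd {p : ℕ × ℕ} (hp : p ∈ solutions m) : Odd p.2 :=
    odd_of_solution_of_isPrimePow hm (by exact_mod_cast hp.1) (cast_eq_of_mem_solutions hm.pos hp)
  rw [Set.ncard_le_one (finite_solutions hm.one_lt)]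
  intro p hp p' hp'
  refine solutions_injOn_even_snd hm.one_lt hp hp' (propext (iff_of_false ?_ ?_))
  · exact Nat.not_even_iff_odd.mpr (hodd hp)
  · exact Nat.not_even_iff_odd.mpr (hodd hp')

end Counting

/-- For an integer `m ≥ 3`, the Diophantine equation `(2m - 1) x² + 1 = 2 m ^ y` has at most
`2 ^ (ω(m) - 1)` solutions in positive integers, where `ω(m)` is the number of distinct prime
divisors of `m`. -/
theorem solutions_le_two_pow_omega
    (m : ℕ) (hm : 3 ≤ m) :
    {xy : ℕ × ℕ | 0 < xy.1 ∧ 0 < xy.2 ∧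
      (2 * m - 1) * xy.1 ^ 2 + 1 = 2 * m ^ xy.2}.Finite ∧
    {xy : ℕ × ℕ | 0 < xy.1 ∧ 0 < xy.2 ∧
      (2 * m - 1) * xy.1 ^ 2 + 1 = 2 * m ^ xy.2}.ncard ≤
        2 ^ (m.primeFactors.card - 1) := by
  refine ⟨finite_solutions (by omega), ?_⟩
  have hω : 0 < m.primeFactors.card :=
    Finset.card_pos.mpr (Nat.nonempty_primeFactors.mpr (by omega))
  obtain hω1 | hω2 : m.primeFactors.card = 1 ∨ 2 ≤ m.primeFactors.card := by omega
  · rw [hω1]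
    exact ncard_solutions_le_one_of_isPrimePow (isPrimePow_iff_card_primeFactors_eq_one.mpr hω1)
  · calc (solutions m).ncard
      _ ≤ 2 ^ 1 := ncard_solutions_le_two (by omega)
      _ ≤ 2 ^ (m.primeFactors.card - 1) := Nat.pow_le_pow_right two_pos (by omega)
end

section
/- Let t ≥ 3 be an odd square-free integer. For every prime q with q ≡ 1 (mod 4), the integer t divides the class number of the imaginary bi-quadratic field ℚ(√(1 − 2q^t), √q), and the collection of such bi-quadratic fields (as q ranges over primes congruent to 1 mod 4) is infinite. In particular, there exist infinitely many imaginary bi-quadratic fields whose class number is divisible by t. -/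
open Polynomial NumberField

/-- The imaginary bi-quadratic field `ℚ(√d, √e)`, realized as a subfield of `ℂ`. -/
noncomputable def Qsqrt2 (d e : ℤ) : IntermediateField ℚ ℂ :=
  IntermediateField.adjoin ℚ {sqrtC d, sqrtC e}

instance (d e : ℤ) : FiniteDimensional ℚ (Qsqrt2 d e) := by
  have : Finite ({sqrtC d, sqrtC e} : Set ℂ) :=
    Set.Finite.ofFinset {sqrtC d, sqrtC e} (by simp)
  exact IntermediateField.finiteDimensional_adjoin (fun x hx => by
    rcases hx with h | h
    · exact h ▸ isIntegral_sqrtC d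
    · exact (Set.mem_singleton_iff.mp h) ▸ isIntegral_sqrtC e)

instance (d e : ℤ) : NumberField (Qsqrt2 d e) := ⟨⟩

/-!
Write `1 - 2 q ^ t = d f ^ 2` with `d` square-free. Then `d ≡ 3 (mod 4)`, so `ℤ[√d]` is the ring of
integers of `ℚ(√d)`. The element `α = 1 - q ^ t + f √d` has norm `(q ^ t) ^ 2` and is coprime to its
conjugate, hence `(α) = I ^ t` for an ideal `I`. If the class of `I` had order smaller than `t`,
then `α` would be a unit times a `p`-th power for some prime `p ∣ t`, and the identity
`(1 + f √d) ^ 2 = 2 α` would produce `g` with `g ^ p = 2 ^ ((p - 1) / 2) (1 + f √d)`. The real part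
of `g` is odd and divides a power of `2`, so it is `±1`, and comparing real parts modulo a power of
`2`, modulo `(q ^ (t / p) - 1) / 2`, or modulo `5` when `q ^ (t / p) = 3`, rules such a `g` out.

The degree of `ℚ(√d, √q)` over `ℚ(√d)` is at most `2`, so the relative norm of ideals shows that a
class of odd order keeps its order in the larger field. A number field has finitely many subfields,
so it contains `√q` for only finitely many primes `q`.
-/

/-! ### Real parts of powers in `ℤ√d` -/

-- For odd `b` the remainder is divisible by one more power of `2` than the coefficient of `w`.
lemma exists_one_sub_four_mul_pow_eq {R : Type*} [CommRing R] (w : R) (a b : ℕ) :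
    ∃ z, (1 - 4 * w) ^ (2 ^ a * b) = 1 - 4 * (2 ^ a * b) * w + 8 * 2 ^ a * w ^ 2 * z := by
  induction a with
  | zero =>
    simp only [pow_zero, one_mul, mul_one]
    induction b with
    | zero => exact ⟨0, by simp⟩
    | succ b ih =>
      obtain ⟨z, hz⟩ := ih
      refine ⟨2 * b + z * (1 - 4 * w), ?_⟩
      rw [pow_succ, hz]
      push_cast
      ring
  | succ a ih =>
    obtain ⟨z, hz⟩ := ih
    refine ⟨2 ^ a * b ^ 2 + z + 4 * 2 ^ a * w ^ 2 * z ^ 2 - 4 * (2 ^ a * b) * w * z, ?_⟩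
    rw [pow_succ, mul_right_comm, pow_mul, hz]
    ring

section Zsqrtd

variable {d : ℤ}

lemma re_dvd_re_pow_of_odd (g : ℤ√d) {n : ℕ} (hn : Odd n) : g.re ∣ (g ^ n).re := by
  obtain ⟨m, rfl⟩ := hn
  induction m with
  | zero => simp
  | succ m ih =>
    have hre : (g ^ (2 * (m + 1) + 1)).re =
        (g ^ (2 * m + 1)).re * (g * g).re + g.re * (2 * d * (g ^ (2 * m + 1)).im * g.im) := by
      rw [mul_add_one, add_right_comm, pow_add _ _ 2, pow_two, Zsqrtd.re_mul, Zsqrtd.im_mul g g]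
      ring
    exact hre ▸ dvd_add (ih.mul_right _) (dvd_mul_right _ _)

lemma isUnit_re_neg_pow_mul_iff (x y : ℤ√d) (j : ℕ) :
    IsUnit ((-x) ^ j * y).re ↔ IsUnit (x ^ j * y).re := by
  rcases neg_one_pow_eq_or (ℤ√d) j with h | h <;> simp [neg_pow x, h, -Zsqrtd.re_mul]

lemma odd_re_of_norm_eq_two_mul {r : ℤ} {g : ℤ√d} (hd : Odd d) (hr : Odd r)
    (hg : g.norm = 2 * r) : Odd g.re := by
  rw [Zsqrtd.norm_def] at hg
  by_contra hre
  obtain ⟨x, hx⟩ := Int.not_odd_iff_even.mp hre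
  obtain ⟨y, hy⟩ : Even g.im := by
    have : Even (d * (g.im * g.im)) := ⟨x * g.re - r, by rw [hx] at hg ⊢; linarith⟩
    simpa [Int.even_mul, Int.not_even_iff_odd.mpr hd] using this
  refine Int.not_even_iff_odd.mpr hr ⟨x ^ 2 - d * y ^ 2, ?_⟩
  rw [hx, hy] at hg
  linarith

lemma pow_four_eq_one_of_isUnit (hd : d < 0) {u : ℤ√d} (hu : IsUnit u) : u ^ 4 = 1 := by
  have hnorm : u.re * u.re + -d * (u.im * u.im) = 1 := by
    rw [← (Zsqrtd.norm_eq_one_iff' hd.le u).mpr hu, Zsqrtd.norm_def]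
    ring
  obtain hre | him : u.re = 0 ∨ u.im = 0 := by
    by_contra! h
    have hre_pos : 0 < u.re * u.re := mul_self_pos.mpr h.1
    have him_pos : 0 < -d * (u.im * u.im) := mul_pos (by omega) (mul_self_pos.mpr h.2)
    omega
  · have hsq : u ^ 2 = -1 := by
      rw [hre] at hnorm
      ext
      · rw [pow_two, Zsqrtd.re_mul, Zsqrtd.re_neg, Zsqrtd.re_one, hre]; linarith
      · rw [pow_two, Zsqrtd.im_mul, Zsqrtd.im_neg, Zsqrtd.im_one, hre]; ring
    rw [pow_mul u 2 2, hsq, neg_one_sq]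
  · have hsq : u ^ 2 = 1 := by
      rw [him] at hnorm
      ext
      · rw [pow_two, Zsqrtd.re_mul, Zsqrtd.re_one, him]; linarith
      · rw [pow_two, Zsqrtd.im_mul, Zsqrtd.im_one, him]; ring
    rw [pow_mul u 2 2, hsq, one_pow]

variable {v k : ℤ}

lemma mk_one_sq (h : d * v ^ 2 = -1 - 4 * k) :
    (⟨1, v⟩ : ℤ√d) ^ 2 = (2 : ℤ) * ⟨-2 * k, v⟩ := by
  rw [pow_two, Zsqrtd.smul_val]
  ext
  · rw [Zsqrtd.re_mul]; linear_combination h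
  · rw [Zsqrtd.im_mul]; ring

lemma mk_neg_two_mul_sq (h : d * v ^ 2 = -1 - 4 * k) :
    (⟨-2 * k, v⟩ : ℤ√d) ^ 2 = -(1 - 4 * (k * ⟨k - 1, -v⟩)) := by
  rw [pow_two]
  ext
  · simp; linear_combination h
  · simp; ring

lemma not_isUnit_re_pow_mul_of_even (h : d * v ^ 2 = -1 - 4 * k) (hk : k ≠ 0) {j : ℕ}
    (hj : j ≠ 0) : ¬ IsUnit ((⟨-2 * k, v⟩ : ℤ√d) ^ (2 * j) * ⟨1, v⟩).re := by
  obtain ⟨a, b, ⟨c, hc⟩, rfl⟩ := Nat.exists_eq_two_pow_mul_odd hj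
  set y : ℤ√d := ⟨k - 1, -v⟩ with hy
  obtain ⟨z, hz⟩ := exists_one_sub_four_mul_pow_eq (k * y) a b
  set Z := (y ^ 2 * z * (⟨1, v⟩ : ℤ√d)).re
  have hre : ((1 - 4 * (k * y)) ^ (2 ^ a * b) * ⟨1, v⟩).re =
      1 + 4 * (2 ^ a * k ^ 2 * (2 * Z - 5 * b)) := by
    have hsplit : (1 - 4 * (k * y)) ^ (2 ^ a * b) * ⟨1, v⟩ =
        ⟨1, v⟩ - ((4 * (2 ^ a * b) * k : ℤ) : ℤ√d) * (y * ⟨1, v⟩) +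
          ((8 * 2 ^ a * k ^ 2 : ℤ) : ℤ√d) * (y ^ 2 * z * ⟨1, v⟩) := by
      rw [hz]; push_cast; ring
    have hy_re : (y * ⟨1, v⟩).re = 5 * k := by
      rw [hy, Zsqrtd.re_mul]; linear_combination -h
    rw [hsplit, Zsqrtd.re_add, Zsqrtd.re_sub, Zsqrtd.re_smul, Zsqrtd.re_smul, hy_re]
    ring
  rw [pow_mul, mk_neg_two_mul_sq h, isUnit_re_neg_pow_mul_iff, hre, Int.isUnit_iff]
  -- The last factor is odd because `b` is, so the real part is `1 + 4 N` with `N ≠ 0`.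
  have hne : 2 ^ a * k ^ 2 * (2 * Z - 5 * b) ≠ 0 :=
    mul_ne_zero (by positivity) (by subst hc; push_cast; omega)
  omega

lemma not_isUnit_re_pow_mul_of_odd (h : d * v ^ 2 = -1 - 4 * k) (hk : 1 < k) (j : ℕ) :
    ¬ IsUnit ((⟨-2 * k, v⟩ : ℤ√d) ^ (2 * j + 1) * ⟨1, v⟩).re := by
  set y : ℤ√d := ⟨k - 1, -v⟩
  set g : ℤ√d := ⟨-2 * k, v⟩ * ⟨1, v⟩ with hg
  obtain ⟨z, hz⟩ : 4 * (k * y) ∣ 1 - (1 - 4 * (k * y)) ^ j := by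
    simpa using one_sub_dvd_one_sub_pow (1 - 4 * (k * y)) j
  set Z := (y * z * g).re
  have hre : ((1 - 4 * (k * y)) ^ j * g).re = -1 - 2 * (k * (3 + 2 * Z)) := by
    have hsplit : (1 - 4 * (k * y)) ^ j * g = g - ((4 * k : ℤ) : ℤ√d) * (y * z * g) := by
      push_cast; linear_combination -g * hz
    have hg_re : g.re = -1 - 6 * k := by
      rw [hg, Zsqrtd.re_mul]; linear_combination h
    rw [hsplit, Zsqrtd.re_sub, Zsqrtd.re_smul, hg_re]
    ring
  rw [pow_succ, pow_mul, mul_assoc, mk_neg_two_mul_sq h, isUnit_re_neg_pow_mul_iff, hre,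
    Int.isUnit_iff]
  rintro (h1 | h0)
  · have := Int.eq_one_or_neg_one_of_mul_eq_one
      (show k * -(3 + 2 * Z) = 1 by linarith)
    omega
  · have := mul_ne_zero (by omega : k ≠ 0) (by omega : 3 + 2 * Z ≠ 0)
    omega

lemma exists_mk_pow_mul_eq (h : d * v ^ 2 = -5) (j : ℕ) :
    ∃ r s : ℤ, (⟨-2, v⟩ : ℤ√d) ^ (2 * j + 1) * ⟨1, v⟩ = ⟨r, s * v⟩ ∧ (r % 5 = 2 ∨ r % 5 = 3) := by
  induction j with
  | zero =>
    refine ⟨-7, -1, ?_, by norm_num⟩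
    ext
    · simp; linear_combination h
    · simp; ring
  | succ j ih =>
    obtain ⟨r, s, hrs, hr⟩ := ih
    have hsq : (⟨-2, v⟩ : ℤ√d) ^ 2 = ⟨-1, -4 * v⟩ := by
      rw [pow_two]
      ext
      · rw [Zsqrtd.re_mul]; linear_combination h
      · rw [Zsqrtd.im_mul]; ring
    refine ⟨-r + 20 * s, -4 * r - s, ?_, by omega⟩
    rw [mul_add_one, add_right_comm, pow_add, mul_right_comm, hrs, hsq]
    ext
    · rw [Zsqrtd.re_mul]; linear_combination -4 * s * h
    · rw [Zsqrtd.im_mul]; ring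

lemma not_isUnit_re_pow_mul (h : d * v ^ 2 = -1 - 4 * k) (hk : 0 < k) {m : ℕ} (hm : m ≠ 0) :
    ¬ IsUnit ((⟨-2 * k, v⟩ : ℤ√d) ^ m * ⟨1, v⟩).re := by
  obtain ⟨j, rfl | rfl⟩ := m.even_or_odd'
  · exact not_isUnit_re_pow_mul_of_even h hk.ne' (by omega)
  obtain rfl | hk1 : k = 1 ∨ 1 < k := by omega
  · obtain ⟨r, s, hrs, hr⟩ := exists_mk_pow_mul_eq h j
    rw [mul_one, hrs, Int.isUnit_iff]
    change ¬ (r = 1 ∨ r = -1)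
    omega
  · exact not_isUnit_re_pow_mul_of_odd h hk1 j

lemma not_isUnit_re_of_pow_eq (hk : 0 < k) {m : ℕ} (hm : m ≠ 0) {g z : ℤ√d}
    (hre : IsUnit g.re) (hnorm : g.norm = 2 * (2 * k + 1))
    (hz : g ^ (2 * m + 1) = (2 ^ m : ℤ) * z) : ¬ IsUnit z.re := by
  have hre_sq : g.re * g.re = 1 := Int.isUnit_mul_self hre
  set v := g.re * g.im with hv
  have h : d * v ^ 2 = -1 - 4 * k := by
    rw [Zsqrtd.norm_def] at hnorm
    linear_combination (d * g.im ^ 2 + 1) * hre_sq - hnorm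
  have hg : g = (g.re : ℤ√d) * ⟨1, v⟩ := by
    ext
    · simp
    · simp only [hv, Zsqrtd.im_smul]; linear_combination -g.im * hre_sq
  have hz_eq : z = ((g.re ^ (2 * m + 1) : ℤ) : ℤ√d) * (⟨-2 * k, v⟩ ^ m * ⟨1, v⟩) := by
    refine Zsqrtd.eq_of_smul_eq_smul_left (a := 2 ^ m) (by positivity) ?_
    rw [← hz]
    nth_rw 1 [hg]
    have hpow : (⟨1, v⟩ : ℤ√d) ^ (2 * m + 1) =
        ((2 ^ m : ℤ) : ℤ√d) * (⟨-2 * k, v⟩ ^ m * ⟨1, v⟩) := by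
      rw [pow_succ, pow_mul, mk_one_sq h, mul_pow]
      push_cast
      ring
    rw [mul_pow, hpow]
    push_cast
    ring
  rw [hz_eq, Zsqrtd.re_smul]
  exact fun hu => not_isUnit_re_pow_mul h hk hm (isUnit_of_mul_isUnit_right hu)

lemma pow_ne_two_pow_mul_mk_one {r f : ℤ} (hr : Odd r) (hr1 : 1 < r) {m : ℕ} (hm : m ≠ 0)
    (hf : d * f ^ 2 = 1 - 2 * r ^ (2 * m + 1)) (g : ℤ√d) :
    g ^ (2 * m + 1) ≠ (2 ^ m : ℤ) * ⟨1, f⟩ := by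
  intro hg
  have hodd : Odd (2 * m + 1) := odd_two_mul_add_one m
  have hnorm : g.norm = 2 * r := by
    refine hodd.strictMono_pow.injective ?_
    have hnorm_pow : (g ^ (2 * m + 1)).norm = g.norm ^ (2 * m + 1) :=
      map_pow Zsqrtd.normMonoidHom g _
    change g.norm ^ (2 * m + 1) = (2 * r) ^ (2 * m + 1)
    rw [← hnorm_pow, hg, Zsqrtd.norm_mul, Zsqrtd.norm_intCast, Zsqrtd.norm_def]
    linear_combination -(2 ^ m * 2 ^ m) * hf
  have hd : Odd d := by
    have : Odd (d * f ^ 2) := ⟨-r ^ (2 * m + 1), by rw [hf]; ring⟩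
    exact (Int.odd_mul.mp this).1
  have hre_dvd : g.re ∣ 2 ^ m := by
    have := re_dvd_re_pow_of_odd g hodd
    rwa [hg, Zsqrtd.re_smul, mul_one] at this
  have hre_coprime : IsCoprime g.re (2 ^ m) :=
    (Int.isCoprime_two_right.mpr (odd_re_of_norm_eq_two_mul hd hr hnorm)).pow_right
  obtain ⟨k, rfl⟩ := hr
  exact not_isUnit_re_of_pow_eq (by omega) hm (hre_coprime.isUnit_of_dvd' dvd_rfl hre_dvd) hnorm hg
    isUnit_one

lemma not_associated_pow [IsDomain (ℤ√d)] [IsIntegrallyClosed (ℤ√d)] {r f : ℤ} (hr : Odd r)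
    (hr1 : 1 < r) {p : ℕ} (hp : Odd p) (hp1 : 1 < p) (hf : d * f ^ 2 = 1 - 2 * r ^ p)
    (b : ℤ√d) : ¬ Associated (b ^ p) ⟨1 - r ^ p, f⟩ := by
  rintro ⟨u, hu⟩
  obtain ⟨m, rfl⟩ := hp
  have hd : d < 0 := by
    have : r ^ 1 ≤ r ^ (2 * m + 1) := pow_le_pow_right₀ hr1.le (by omega)
    by_contra! hd0
    have := mul_nonneg hd0 (sq_nonneg f)
    linarith
  -- The exponent of the unit group divides `4` and `p ^ 2 ≡ 1 [MOD 4]`, so `u` is a `p`-th power.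
  have hunit : (u : ℤ√d) = ((u : ℤ√d) ^ (2 * m + 1)) ^ (2 * m + 1) := by
    have hexp : (2 * m + 1) * (2 * m + 1) = 4 * (m * m + m) + 1 := by ring
    rw [← pow_mul, hexp, pow_succ, pow_mul, pow_four_eq_one_of_isUnit hd u.isUnit, one_pow,
      one_mul]
  rw [hunit, ← mul_pow] at hu
  set b' : ℤ√d := b * (u : ℤ√d) ^ (2 * m + 1)
  have hsq : (⟨1, f⟩ : ℤ√d) ^ 2 = 2 * b' * (b' ^ m) ^ 2 := by
    have : (⟨1, f⟩ : ℤ√d) ^ 2 = (2 : ℤ) * ⟨1 - r ^ (2 * m + 1), f⟩ := by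
      rw [pow_two, Zsqrtd.smul_val]
      ext
      · rw [Zsqrtd.re_mul]; linear_combination hf
      · rw [Zsqrtd.im_mul]; ring
    rw [this, ← hu]
    push_cast
    ring
  obtain ⟨g, hg⟩ : b' ^ m ∣ ⟨1, f⟩ :=
    (IsIntegrallyClosed.pow_dvd_pow_iff two_ne_zero).mp ⟨2 * b', by rw [hsq, mul_comm]⟩
  have hb' : b' ^ m ≠ 0 := by
    intro h0
    have := congrArg Zsqrtd.re hg
    simp [h0] at this
  have hg_sq : g ^ 2 = 2 * b' :=
    mul_left_cancel₀ (pow_ne_zero 2 hb') (by rw [← mul_pow, ← hg, hsq, mul_comm])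
  refine pow_ne_two_pow_mul_mk_one hr hr1 (by omega) hf g ?_
  rw [pow_succ, pow_mul, hg_sq, hg, mul_pow]
  push_cast
  ring

end Zsqrtd

/-! ### Orders of ideal classes -/

section ClassGroup

lemma exists_orderOf_classGroup_eq {R : Type*} [CommRing R] [IsDedekindDomain R] {a b c : R}
    {t : ℕ} (ht : t ≠ 0) (ha : a ≠ 0) (hab : IsCoprime a b) (hc : a * b = c ^ t)
    (hroot : ∀ p : ℕ, p.Prime → p ∣ t → ∀ x, ¬ Associated (x ^ p) a) :
    ∃ C : ClassGroup R, orderOf C = t := by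
  obtain ⟨I, hI⟩ : ∃ I : Ideal R, Ideal.span {a} = I ^ t := by
    let _ : GCDMonoid (Ideal R) := UniqueFactorizationMonoid.toGCDMonoid _
    refine exists_eq_pow_of_mul_eq_pow_of_coprime (b := Ideal.span {b}) (c := Ideal.span {c})
      ((Ideal.isCoprime_span_singleton_iff a b).mpr hab) ?_
    rw [Ideal.span_singleton_mul_span_singleton, Ideal.span_singleton_pow, hc]
  have hI0 : I ∈ nonZeroDivisors (Ideal R) := by
    rw [mem_nonZeroDivisors_iff_ne_zero]
    rintro rfl
    rw [zero_pow ht] at hI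
    exact ha (Ideal.span_singleton_eq_bot.mp hI)
  have hpow (n : ℕ) : ClassGroup.mk0 ⟨I, hI0⟩ ^ n = 1 ↔ (I ^ n).IsPrincipal := by
    rw [← map_pow, SubmonoidClass.mk_pow, ClassGroup.mk0_eq_one_iff]
  refine ⟨ClassGroup.mk0 ⟨I, hI0⟩,
    orderOf_eq_of_pow_and_pow_div_prime (Nat.pos_of_ne_zero ht) ?_ fun p hp hpt hone => ?_⟩
  · exact (hpow t).mpr (hI ▸ ⟨a, rfl⟩)
  · obtain ⟨x, hx⟩ := (hpow _).mp hone
    refine hroot p hp hpt x (Ideal.span_singleton_eq_span_singleton.mp ?_)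
    rw [← Ideal.span_singleton_pow, hI, ← Ideal.submodule_span_eq, ← hx, ← pow_mul,
      Nat.div_mul_cancel hpt]

lemma exists_orderOf_classGroup_eq_of_zsqrtd_ringEquiv {d : ℤ} {O : Type*}
    [CommRing O] [IsDedekindDomain O] (e : ℤ√d ≃+* O) {q f : ℤ} (hq : Odd q) (hq1 : 1 < q) {t : ℕ}
    (ht : Odd t) (hf : d * f ^ 2 = 1 - 2 * q ^ t) : ∃ C : ClassGroup O, orderOf C = t := by
  have : IsDomain (ℤ√d) := e.toMulEquiv.isDomain
  have : IsIntegrallyClosed (ℤ√d) := .of_equiv e.symm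
  have hmul : (⟨1 - q ^ t, f⟩ : ℤ√d) * ⟨1 - q ^ t, -f⟩ = ((q ^ t) ^ 2 : ℤ) := by
    ext
    · rw [Zsqrtd.re_mul, Zsqrtd.re_intCast]; linear_combination -hf
    · rw [Zsqrtd.im_mul, Zsqrtd.im_intCast]; ring
  have hadd : (⟨1 - q ^ t, f⟩ : ℤ√d) + ⟨1 - q ^ t, -f⟩ = (2 * (1 - q ^ t) : ℤ) := by
    ext
    · rw [Zsqrtd.re_add, Zsqrtd.re_intCast]; ring
    · rw [Zsqrtd.im_add, Zsqrtd.im_intCast]; ring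
  have hcop : IsCoprime (⟨1 - q ^ t, f⟩ : ℤ√d) ⟨1 - q ^ t, -f⟩ := by
    have h2 : IsCoprime 2 ((q ^ t) ^ 2) := Int.isCoprime_two_left.mpr (hq.pow.pow)
    have h1 : IsCoprime (1 - q ^ t) ((q ^ t) ^ 2) := IsCoprime.pow_right ⟨1, 1, by ring⟩
    have h : IsCoprime (2 * (1 - q ^ t) : ℤ) ((q ^ t) ^ 2) := h2.mul_left h1
    replace h := h.map (Int.castRingHom (ℤ√d))
    rw [eq_intCast, eq_intCast, ← hadd, ← hmul] at h
    refine IsCoprime.of_add_mul_left_right (z := 1) ?_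
    rw [mul_one, add_comm]
    exact h.of_mul_right_left.symm
  refine exists_orderOf_classGroup_eq (a := e ⟨1 - q ^ t, f⟩) (b := e ⟨1 - q ^ t, -f⟩)
    (c := e ((q ^ 2 : ℤ) : ℤ√d)) ht.pos.ne' ?_ (hcop.map e.toRingHom) ?_ fun p hp hpt x hx => ?_
  · rw [EmbeddingLike.map_ne_zero_iff]
    intro h0
    exact (one_lt_pow₀ hq1 ht.pos.ne').ne (sub_eq_zero.mp (congrArg Zsqrtd.re h0))
  · rw [← map_mul, hmul, ← map_pow, ← Int.cast_pow, pow_right_comm]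
  · obtain ⟨s, rfl⟩ := hpt
    rw [pow_mul'] at hf hx
    obtain ⟨hodd_p, hodd_s⟩ := Nat.odd_mul.mp ht
    refine not_associated_pow hq.pow (one_lt_pow₀ hq1 hodd_s.pos.ne') hodd_p hp.one_lt hf
      (e.symm x) ?_
    simpa using hx.map e.symm

attribute [local instance] FractionRing.liftAlgebra

lemma pow_finrank_eq_one_of_extendedHom_eq_one {R S : Type*} [CommRing R] [IsDedekindDomain R]
    [CommRing S] [IsDedekindDomain S] [Algebra R S] [Module.Finite R S] [Module.IsTorsionFree R S]
    [Algebra.IsSeparable (FractionRing R) (FractionRing S)] {C : ClassGroup R}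
    (hC : ClassGroup.extendedHom R S C = 1) : C ^ Module.finrank R S = 1 := by
  obtain ⟨I, rfl⟩ := ClassGroup.mk0_surjective C
  rw [ClassGroup.extendedHom_mk0, ClassGroup.mk0_eq_one_iff] at hC
  obtain ⟨x, hx⟩ := hC
  rw [← map_pow, SubmonoidClass.mk_pow, ClassGroup.mk0_eq_one_iff, ← Ideal.relNorm_algebraMap,
    hx, Ideal.submodule_span_eq, Ideal.relNorm_singleton]
  exact ⟨_, rfl⟩

lemma orderOf_dvd_classNumber_of_coprime_finrank {F K : Type*} [Field F] [NumberField F] [Field K]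
    [NumberField K] [Algebra F K] (C : ClassGroup (𝓞 F))
    (hC : (orderOf C).Coprime (Module.finrank F K)) : orderOf C ∣ classNumber K := by
  refine dvd_trans ?_ (orderOf_dvd_card (x := ClassGroup.extendedHom (𝓞 F) (𝓞 K) C))
  refine hC.dvd_of_dvd_mul_right (orderOf_dvd_of_pow_eq_one ?_)
  rw [pow_mul, IsFractionRing.finrank_eq (𝓞 F) F (𝓞 K) K]
  exact pow_finrank_eq_one_of_extendedHom_eq_one (by rw [map_pow, pow_orderOf_eq_one])

end ClassGroup

/-! ### Quadratic fields -/

lemma minpoly_eq_quadratic {K L : Type*} [Field K] [Ring L] [IsDomain L] [Algebra K L] {x : L}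
    (hx : x ∉ (algebraMap K L).range) {s n : K}
    (h : x ^ 2 - algebraMap K L s * x + algebraMap K L n = 0) :
    minpoly K x = X ^ 2 - C s * X + C n := by
  have hmonic : (X ^ 2 - C s * X + C n).Monic := by monicity!
  have hdeg : (X ^ 2 - C s * X + C n).natDegree = 2 := by compute_degree!
  have haeval : aeval x (X ^ 2 - C s * X + C n) = 0 := by simpa using h
  have hint : IsIntegral K x := ⟨_, hmonic, by rwa [← aeval_def]⟩
  refine (eq_of_monic_of_dvd_of_natDegree_le (minpoly.monic hint) hmonic
    (minpoly.dvd K x haeval) ?_).symm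
  rw [hdeg]
  exact (minpoly.two_le_natDegree_iff hint).mpr hx

lemma exists_coeff_of_isIntegral_quadratic (R : Type*) {K L : Type*} [CommRing R] [IsDomain R]
    [IsIntegrallyClosed R] [Field K] [Algebra R K] [IsFractionRing R K] [CommRing L] [IsDomain L]
    [Algebra K L] [Algebra R L] [IsScalarTower R K L] {x : L} (hint : IsIntegral R x)
    (hx : x ∉ (algebraMap K L).range) {s n : K}
    (h : x ^ 2 - algebraMap K L s * x + algebraMap K L n = 0) :
    ∃ s' n' : R, algebraMap R K s' = s ∧ algebraMap R K n' = n := by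
  have hmap := minpoly.isIntegrallyClosed_eq_field_fractions' K hint
  rw [minpoly_eq_quadratic hx h] at hmap
  refine ⟨-(minpoly R x).coeff 1, (minpoly R x).coeff 0, ?_, ?_⟩
  · rw [map_neg, ← coeff_map, ← hmap]; simp
  · rw [← coeff_map, ← hmap]; simp

lemma exists_eq_intCast_of_sq_mul {d : ℤ} (hd : Squarefree d) {x : ℚ} {k : ℤ}
    (h : x ^ 2 * d = k) : ∃ n : ℤ, x = n := by
  have hint : IsIntegral ℤ ((x * d) ^ 2) := by
    have hsq : (x * d) ^ 2 = algebraMap ℤ ℚ (k * d) := by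
      rw [eq_intCast, Int.cast_mul, ← h]; ring
    exact hsq ▸ isIntegral_algebraMap
  obtain ⟨y, hy⟩ := IsIntegrallyClosed.exists_algebraMap_eq_of_isIntegral_pow two_pos hint
  rw [eq_intCast] at hy
  have hd0 : (d : ℚ) ≠ 0 := by exact_mod_cast hd.ne_zero
  obtain ⟨n, rfl⟩ : d ∣ y := by
    refine (hd.dvd_pow_iff_dvd two_ne_zero).mp ⟨k, ?_⟩
    have : (y : ℚ) ^ 2 = d * k := by rw [hy, ← h]; ring
    exact_mod_cast this
  exact ⟨n, by push_cast at hy; exact mul_right_cancel₀ hd0 (by rw [← hy, mul_comm])⟩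

lemma even_and_even_of_four_dvd {d a b : ℤ} (hd : d % 4 = 2 ∨ d % 4 = 3)
    (h : 4 ∣ a ^ 2 - d * b ^ 2) : Even a ∧ Even b := by
  obtain ⟨e, he⟩ : ∃ e, d = 4 * e + 2 ∨ d = 4 * e + 3 := ⟨d / 4, by omega⟩
  obtain ⟨k, rfl | rfl⟩ := a.even_or_odd' <;> obtain ⟨l, rfl | rfl⟩ := b.even_or_odd'
  · simp
  all_goals
    obtain ⟨c, hc⟩ := h
    rcases he with rfl | rfl <;> ring_nf at hc <;> omega

lemma not_isSquare_of_emod_four {d : ℤ} (hd : d % 4 = 2 ∨ d % 4 = 3) : ¬ IsSquare d := by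
  rintro ⟨y, rfl⟩
  obtain ⟨k, rfl | rfl⟩ := y.even_or_odd' <;> ring_nf at hd <;> omega

lemma sqrtC_ne_ratCast {d : ℤ} (hd : ¬ IsSquare d) (c : ℚ) : sqrtC d ≠ c := by
  intro h
  refine hd (Rat.isSquare_intCast_iff.mp ⟨c, ?_⟩)
  have := sqrtC_sq d
  rw [h, pow_two] at this
  exact_mod_cast this.symm

lemma eq_and_eq_zero_of_add_mul_sqrtC_eq {d : ℤ} (hd : ¬ IsSquare d) {a b c : ℚ}
    (h : (a + b * sqrtC d : ℂ) = c) : a = c ∧ b = 0 := by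
  have hb : b = 0 := by
    by_contra hb
    have hb' : (b : ℂ) ≠ 0 := by exact_mod_cast hb
    refine sqrtC_ne_ratCast hd ((c - a) / b) ?_
    push_cast
    rw [eq_div_iff hb', ← h]
    ring
  refine ⟨?_, hb⟩
  rw [hb, Rat.cast_zero, zero_mul, add_zero] at h
  exact_mod_cast h

namespace Qsqrt

lemma sqrtC_mem (d : ℤ) : sqrtC d ∈ Qsqrt d := IntermediateField.mem_adjoin_simple_self ℚ _

lemma exists_eq_add_mul {d : ℤ} {x : ℂ} (hx : x ∈ Qsqrt d) :
    ∃ a b : ℚ, x = a + b * sqrtC d := by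
  rw [Qsqrt, ← IntermediateField.mem_toSubalgebra,
    IntermediateField.adjoin_simple_toSubalgebra_of_isAlgebraic
      (isIntegral_sqrtC d).isAlgebraic] at hx
  induction hx using Algebra.adjoin_induction with
  | mem x h => exact ⟨0, 1, by rw [Set.mem_singleton_iff.mp h]; simp⟩
  | algebraMap r => exact ⟨r, 0, by simp⟩
  | add x y _ _ hx hy =>
    obtain ⟨a, b, rfl⟩ := hx
    obtain ⟨a', b', rfl⟩ := hy
    exact ⟨a + a', b + b', by push_cast; ring⟩
  | mul x y _ _ hx hy =>
    obtain ⟨a, b, rfl⟩ := hx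
    obtain ⟨a', b', rfl⟩ := hy
    refine ⟨a * a' + b * b' * d, a * b' + a' * b, ?_⟩
    push_cast
    linear_combination (b * b' : ℂ) * sqrtC_sq d

lemma exists_trace_norm_of_isIntegral {d : ℤ} (hd : ¬ IsSquare d) {a b : ℚ}
    (h : IsIntegral ℤ (a + b * sqrtC d)) :
    ∃ s n : ℤ, 2 * a = s ∧ a ^ 2 - d * b ^ 2 = n := by
  by_cases hx : (a + b * sqrtC d) ∈ (algebraMap ℚ ℂ).range
  · obtain ⟨c, hc⟩ := hx
    obtain ⟨rfl, rfl⟩ := eq_and_eq_zero_of_add_mul_sqrtC_eq hd hc.symm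
    rw [← hc, isIntegral_algebraMap_iff (algebraMap ℚ ℂ).injective] at h
    obtain ⟨m, rfl⟩ := IsIntegrallyClosed.isIntegral_iff.mp h
    exact ⟨2 * m, m ^ 2, by simp, by simp⟩
  · obtain ⟨s, n, hs, hn⟩ := exists_coeff_of_isIntegral_quadratic ℤ h hx
      (s := 2 * a) (n := a ^ 2 - d * b ^ 2) (by
        simp only [eq_ratCast]; push_cast; linear_combination (b : ℂ) ^ 2 * sqrtC_sq d)
    exact ⟨s, n, hs.symm, hn.symm⟩

lemma exists_intCast_of_isIntegral {d : ℤ} (hsf : Squarefree d) (hd4 : d % 4 = 2 ∨ d % 4 = 3)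
    {a b : ℚ} (h : IsIntegral ℤ (a + b * sqrtC d)) : ∃ m n : ℤ, a = m ∧ b = n := by
  obtain ⟨s, n, hs, hn⟩ := exists_trace_norm_of_isIntegral (not_isSquare_of_emod_four hd4) h
  obtain ⟨r, hr⟩ := exists_eq_intCast_of_sq_mul hsf (x := 2 * b) (k := s ^ 2 - 4 * n) (by
    push_cast; rw [← hs, ← hn]; ring)
  have hsr : (s : ℚ) ^ 2 - d * r ^ 2 = 4 * n := by rw [← hs, ← hr, ← hn]; ring
  obtain ⟨⟨s', rfl⟩, ⟨r', rfl⟩⟩ := even_and_even_of_four_dvd hd4 ⟨n, by exact_mod_cast hsr⟩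
  push_cast at hs hr
  exact ⟨s', r', by linarith, by linarith⟩

lemma nonempty_zsqrtd_ringEquiv {d : ℤ} (hsf : Squarefree d) (hd4 : d % 4 = 2 ∨ d % 4 = 3) :
    Nonempty (ℤ√d ≃+* 𝓞 (Qsqrt d)) := by
  have hint : IsIntegral ℤ (⟨sqrtC d, sqrtC_mem d⟩ : Qsqrt d) := by
    refine IsIntegral.of_pow two_pos ?_
    have hsq : (⟨sqrtC d, sqrtC_mem d⟩ : Qsqrt d) ^ 2 = algebraMap ℤ (Qsqrt d) d :=
      Subtype.ext (by simp [sqrtC_sq])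
    exact hsq ▸ isIntegral_algebraMap
  let ι : 𝓞 (Qsqrt d) →+* ℂ := (algebraMap (Qsqrt d) ℂ).comp (algebraMap _ _)
  have hι : Function.Injective ι :=
    (algebraMap (Qsqrt d) ℂ).injective.comp RingOfIntegers.coe_injective
  obtain ⟨ω, hω⟩ : ∃ ω, ι ω = sqrtC d := ⟨⟨_, hint⟩, rfl⟩
  have hω_sq : ω * ω = (d : 𝓞 (Qsqrt d)) :=
    hι (by rw [map_mul, map_intCast, hω, ← pow_two, sqrtC_sq])
  let φ : ℤ√d →+* 𝓞 (Qsqrt d) := Zsqrtd.lift ⟨ω, hω_sq⟩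
  have hφ (m n : ℤ) : ι (φ ⟨m, n⟩) = m + n * sqrtC d := by
    rw [← hω, ← map_intCast ι m, ← map_intCast ι n, ← map_mul, ← map_add]
    rfl
  refine ⟨RingEquiv.ofBijective φ ⟨Zsqrtd.lift_injective _ fun n hn => ?_, fun x => ?_⟩⟩
  · exact not_isSquare_of_emod_four hd4 ⟨n, hn⟩
  · obtain ⟨a, b, hab⟩ : ∃ a b : ℚ, ι x = a + b * sqrtC d := exists_eq_add_mul (x : Qsqrt d).2
    have hx : IsIntegral ℤ (ι x) := (RingOfIntegers.isIntegral x).map ι.toIntAlgHom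
    rw [hab] at hx
    obtain ⟨m, n, rfl, rfl⟩ := exists_intCast_of_isIntegral hsf hd4 hx
    refine ⟨⟨m, n⟩, hι ?_⟩
    rw [hφ, hab, Rat.cast_intCast, Rat.cast_intCast]

end Qsqrt

lemma emod_four_eq_three_of_mul_sq_eq {d f Q : ℤ} (hQ : Odd Q) (h : d * f ^ 2 = 1 - 2 * Q) :
    d % 4 = 3 := by
  obtain ⟨c, rfl⟩ := hQ
  obtain ⟨k, rfl | rfl⟩ := f.even_or_odd'
  · have : 2 * (2 * d * k ^ 2 + 2 * c + 1) = 1 := by linarith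
    omega
  · have : d = 4 * (-c - d * (k ^ 2 + k)) - 1 := by linarith
    omega

lemma exists_squarefree_mul_sq_eq {D : ℤ} (hD : D ≠ 0) :
    ∃ d f : ℤ, Squarefree d ∧ f ≠ 0 ∧ d * f ^ 2 = D := by
  obtain ⟨a, f, -, hf, haf, hsf⟩ := Nat.sq_mul_squarefree_of_pos (Int.natAbs_pos.mpr hD)
  refine ⟨D.sign * a, f, ?_, by exact_mod_cast hf.ne', ?_⟩
  · rw [← Int.squarefree_natAbs, Int.natAbs_mul, Int.natAbs_sign_of_ne_zero hD, one_mul]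
    exact hsf
  · rw [mul_assoc, mul_comm (a : ℤ)]
    exact_mod_cast haf ▸ Int.sign_mul_natAbs D

namespace Qsqrt

lemma mul_sq (d : ℤ) {f : ℤ} (hf : f ≠ 0) : Qsqrt (d * f ^ 2) = Qsqrt d := by
  have hfC : (f : ℂ) ≠ 0 := by exact_mod_cast hf
  have hsq : sqrtC (d * f ^ 2) ^ 2 = (f * sqrtC d) ^ 2 := by
    rw [mul_pow, sqrtC_sq, sqrtC_sq]; push_cast; ring
  have hmem (K : IntermediateField ℚ ℂ) : sqrtC (d * f ^ 2) ∈ K ↔ sqrtC d ∈ K := by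
    have hiff : f * sqrtC d ∈ K ↔ sqrtC d ∈ K :=
      ⟨fun h => by simpa [hfC] using K.mul_mem (K.inv_mem (intCast_mem K f)) h,
        K.mul_mem (intCast_mem K f)⟩
    rcases sq_eq_sq_iff_eq_or_eq_neg.mp hsq with h | h <;> rw [h]
    · exact hiff
    · rw [neg_mem_iff, hiff]
  refine le_antisymm ?_ ?_ <;> rw [Qsqrt, IntermediateField.adjoin_simple_le_iff]
  · exact (hmem _).mpr (sqrtC_mem d)
  · exact (hmem _).mp (sqrtC_mem _)

lemma exists_orderOf_classGroup_eq {q : ℤ} (hq : Odd q) (hq1 : 1 < q) {t : ℕ} (ht : Odd t) :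
    ∃ C : ClassGroup (𝓞 (Qsqrt (1 - 2 * q ^ t))), orderOf C = t := by
  obtain ⟨d, f, hsf, hf0, hf⟩ := exists_squarefree_mul_sq_eq (D := 1 - 2 * q ^ t) (by omega)
  rw [← hf, mul_sq d hf0]
  obtain ⟨e⟩ := nonempty_zsqrtd_ringEquiv hsf (.inr (emod_four_eq_three_of_mul_sq_eq hq.pow hf))
  exact exists_orderOf_classGroup_eq_of_zsqrtd_ringEquiv e hq hq1 ht hf

lemma finrank_le_two (d : ℤ) : Module.finrank ℚ (Qsqrt d) ≤ 2 := by
  rw [Qsqrt, IntermediateField.adjoin.finrank (isIntegral_sqrtC d),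
    ← natDegree_X_pow_sub_C (n := 2) (r := (d : ℚ))]
  exact natDegree_le_of_dvd (minpoly.dvd _ _ (by simp [sqrtC_sq]))
    (monic_X_pow_sub_C _ two_ne_zero).ne_zero

lemma finrank_eq_two {d : ℤ} (hd : ¬ IsSquare d) : Module.finrank ℚ (Qsqrt d) = 2 := by
  refine (finrank_le_two d).antisymm ?_
  rw [Qsqrt, IntermediateField.adjoin.finrank (isIntegral_sqrtC d),
    minpoly.two_le_natDegree_iff (isIntegral_sqrtC d)]
  rintro ⟨c, hc⟩
  exact sqrtC_ne_ratCast hd c hc.symm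

end Qsqrt

/-! ### Biquadratic fields -/

namespace Qsqrt2

lemma eq_sup (d e : ℤ) : Qsqrt2 d e = Qsqrt d ⊔ Qsqrt e := by
  rw [Qsqrt2, Qsqrt, Qsqrt, ← IntermediateField.adjoin_union, Set.singleton_union]

lemma finrank_le_four (d e : ℤ) : Module.finrank ℚ (Qsqrt2 d e) ≤ 4 := by
  rw [eq_sup]
  exact (IntermediateField.finrank_sup_le _ _).trans
    (Nat.mul_le_mul (Qsqrt.finrank_le_two d) (Qsqrt.finrank_le_two e))

lemma orderOf_dvd_classNumber {d e : ℤ} (hd : ¬ IsSquare d) (C : ClassGroup (𝓞 (Qsqrt d)))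
    (hC : Odd (orderOf C)) : orderOf C ∣ classNumber (Qsqrt2 d e) := by
  have hle : Qsqrt d ≤ Qsqrt2 d e := eq_sup d e ▸ le_sup_left
  let _ : Algebra (Qsqrt d) (Qsqrt2 d e) := (IntermediateField.inclusion hle).toRingHom.toAlgebra
  have : IsScalarTower ℚ (Qsqrt d) (Qsqrt2 d e) := .of_algebraMap_eq fun _ => rfl
  refine orderOf_dvd_classNumber_of_coprime_finrank C ?_
  have hmul := Module.finrank_mul_finrank ℚ (Qsqrt d) (Qsqrt2 d e)
  rw [Qsqrt.finrank_eq_two hd] at hmul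
  have hle4 := finrank_le_four d e
  have hpos : 0 < Module.finrank ℚ (Qsqrt2 d e) := Module.finrank_pos
  obtain h | h : Module.finrank (Qsqrt d) (Qsqrt2 d e) = 1 ∨
    Module.finrank (Qsqrt d) (Qsqrt2 d e) = 2 := by omega
  · rw [h]; exact Nat.coprime_one_right _
  · rw [h]; exact hC.coprime_two_right

end Qsqrt2

lemma dvd_classNumber_Qsqrt2 {q : ℤ} (hq : Odd q) (hq1 : 1 < q) {t : ℕ} (ht : Odd t) (e : ℤ) :
    t ∣ classNumber (Qsqrt2 (1 - 2 * q ^ t) e) := by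
  have hneg : 1 - 2 * q ^ t < 0 := by
    have : 0 < q ^ t := by positivity
    omega
  obtain ⟨C, hC⟩ := Qsqrt.exists_orderOf_classGroup_eq hq hq1 ht
  have hdvd := Qsqrt2.orderOf_dvd_classNumber (e := e) (not_isSquare_of_neg hneg) C (by rwa [hC])
  rwa [hC] at hdvd

lemma isSquare_mul_of_sqrtC_mem {d e : ℤ} (hd : ¬ IsSquare d) (he : ¬ IsSquare e)
    (h : sqrtC e ∈ Qsqrt d) : IsSquare (d * e) := by
  obtain ⟨a, b, hab⟩ := Qsqrt.exists_eq_add_mul h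
  have hsq : ((a ^ 2 + b ^ 2 * d : ℚ) : ℂ) + (2 * a * b : ℚ) * sqrtC d = (e : ℚ) := by
    have := sqrtC_sq e
    rw [hab] at this
    push_cast
    linear_combination this - (b : ℂ) ^ 2 * sqrtC_sq d
  obtain ⟨he_eq, h2ab⟩ := eq_and_eq_zero_of_add_mul_sqrtC_eq hd hsq
  obtain rfl | rfl : a = 0 ∨ b = 0 := by simpa using h2ab
  · refine Rat.isSquare_intCast_iff.mp ⟨d * b, ?_⟩
    push_cast
    rw [← he_eq]
    ring
  · exact absurd (hab.trans (by simp)) (sqrtC_ne_ratCast he a)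

lemma eq_of_sqrtC_mem_Qsqrt {p q : ℕ} (hp : p.Prime) (hq : q.Prime) (h : sqrtC q ∈ Qsqrt p) :
    p = q := by
  obtain ⟨r, hr⟩ : IsSquare (p * q) := by
    have hp' := (Nat.prime_iff_prime_int.mp hp).not_isSquare
    have hq' := (Nat.prime_iff_prime_int.mp hq).not_isSquare
    exact_mod_cast isSquare_mul_of_sqrtC_mem hp' hq' h
  by_contra hne
  have hsf : Squarefree (p * q) :=
    (Nat.squarefree_mul ((Nat.coprime_primes hp hq).mpr hne)).mpr ⟨hp.squarefree, hq.squarefree⟩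
  have hr1 : r = 1 := Nat.isUnit_iff.mp (hsf r (hr ▸ dvd_rfl))
  rw [hr1, one_mul] at hr
  exact hp.ne_one (Nat.eq_one_of_mul_eq_one_right hr)

lemma finite_Iic_intermediateField {F E : Type*} [Field F] [Field E] [Algebra F E]
    (K : IntermediateField F E) [FiniteDimensional F K] [Algebra.IsSeparable F K] :
    (Set.Iic K).Finite := by
  have : Finite (IntermediateField F K) :=
    Field.finite_intermediateField_of_exists_primitive_element F K
      (Field.exists_primitive_element F K)
  exact (Set.finite_range IntermediateField.lift).subset fun L hL =>
    ⟨IntermediateField.restrict hL, IntermediateField.lift_restrict hL⟩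

lemma finite_setOf_prime_sqrtC_mem (K : IntermediateField ℚ ℂ) [FiniteDimensional ℚ K] :
    {p : ℕ | p.Prime ∧ sqrtC p ∈ K}.Finite := by
  refine Set.Finite.of_finite_image (f := fun p : ℕ => Qsqrt p)
    ((finite_Iic_intermediateField K).subset ?_) ?_
  · rintro _ ⟨p, ⟨-, hpK⟩, rfl⟩
    exact IntermediateField.adjoin_simple_le_iff.mpr hpK
  · rintro p ⟨hp, -⟩ q ⟨hq, -⟩ (h : Qsqrt p = Qsqrt q)
    exact eq_of_sqrtC_mem_Qsqrt hp hq (h ▸ Qsqrt.sqrtC_mem q)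

lemma infinite_image_Qsqrt2 {S : Set ℕ} (hS : S.Infinite) (hprime : ∀ p ∈ S, p.Prime)
    (D : ℕ → ℤ) : ((fun p => Qsqrt2 (D p) p) '' S).Infinite := by
  refine fun hfin => hS (.of_finite_fibers _ hfin ?_)
  rintro _ ⟨p, -, rfl⟩
  refine (finite_setOf_prime_sqrtC_mem (Qsqrt2 (D p) p)).subset ?_
  rintro q ⟨hq, hqp : Qsqrt2 (D q) q = Qsqrt2 (D p) p⟩
  refine ⟨hprime q hq, hqp ▸ ?_⟩
  exact IntermediateField.subset_adjoin ℚ _ (by simp)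

theorem t_dvd_classNumber_biquadratic_general {t : ℕ} (ht : Odd t) :
    (∀ q : ℕ, Odd q → 1 < q → ∀ e : ℤ, t ∣ classNumber (Qsqrt2 (1 - 2 * (q : ℤ) ^ t) e)) ∧
    {K : IntermediateField ℚ ℂ | ∃ q : ℕ, q.Prime ∧ q % 4 = 1 ∧
      K = Qsqrt2 (1 - 2 * (q : ℤ) ^ t) (q : ℤ)}.Infinite := by
  refine ⟨fun q hq hq1 e => ?_, ?_⟩
  · exact dvd_classNumber_Qsqrt2 (by exact_mod_cast hq) (by exact_mod_cast hq1) ht e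
  · have hinf : {q : ℕ | q.Prime ∧ q ≡ 1 [MOD 4]}.Infinite :=
      Nat.infinite_setOfPred_prime_modEq_one four_ne_zero
    refine (infinite_image_Qsqrt2 hinf (fun q hq => hq.1) fun q => 1 - 2 * (q : ℤ) ^ t).mono ?_
    rintro _ ⟨q, ⟨hq, hq4⟩, rfl⟩
    exact ⟨q, hq, hq4, rfl⟩

/-- For an odd square-free integer `t ≥ 3`, for every prime `q ≡ 1 (mod 4)` the integer `t`
divides the class number of the imaginary bi-quadratic field `ℚ(√(1 - 2 q ^ t), √q)`, and the
collection of such bi-quadratic fields is infinite. -/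
theorem t_dvd_classNumber_biquadratic
    (t : ℕ) (ht3 : 3 ≤ t) (htodd : Odd t) (htsf : Squarefree t) :
    (∀ q : ℕ, q.Prime → q % 4 = 1 →
      t ∣ NumberField.classNumber (Qsqrt2 (1 - 2 * (q : ℤ) ^ t) (q : ℤ))) ∧
    {K : IntermediateField ℚ ℂ | ∃ q : ℕ, q.Prime ∧ q % 4 = 1 ∧
      K = Qsqrt2 (1 - 2 * (q : ℤ) ^ t) (q : ℤ)}.Infinite := by
  obtain ⟨hdvd, hinf⟩ := t_dvd_classNumber_biquadratic_general htodd
  exact ⟨fun q hq hq4 => hdvd q (Nat.odd_iff.mpr (by omega)) hq.one_lt q, hinf⟩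
end
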